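/- arXiv:1206.5069 — 2 statements merged into one kernel-verified Lean document; each statement's English description precedes it below -/
import Mathlib

section
/- Under hypothesis (1.0), set δ = sup_{x∈(0,D)} μ(0,x)·ν(x,D). Then the ND principal eigenvalue satisfies λ₀ > 0 if and only if δ < ∞; more precisely, (4δ)^{-1} ≤ λ₀ ≤ δ^{-1}. In particular, when D = ∞: λ₀ = 0 if ν(0,D) = ∞, and λ₀ > 0 if ∫₀^∞ μ(0,x) ν(dx) < ∞. -/
/-!
Everything follows from the two-sided bound `(4δ)⁻¹ ≤ λ₀ ≤ δ⁻¹`, a weighted Hardy inequality of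
Muckenhoupt type and its converse.

*Lower bound* (`muL2_le`): `μ(f²) ≤ 4 δ D(f)` for every test function `f`. Let `f` vanish on
`[t, ∞)`, pick `q ∈ (t, D)` and put `N(x) = ∫_x^q e^{-C}`; truncating `ν(x, D)` at `q` keeps `N`
finite, while `N > 0` on `[0, t]`. From `f(x)² ≤ ∫_x^t 2|f f'|` and Tonelli,
`μ(f²) ≤ ∫ 2|f f'|(u) μ(0, u) du ≤ δ ∫ 2|f f'| / N`, since `μ(0, u) N(u) ≤ δ`. It remains to see that
`∫ 2|f f'| / N ≤ 4 D(f)`. This comes from `(1 / N)' = e^{-C} / N²` by integrating `(f² / N)'` and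
completing a square (`hardy_Icc`). Away from `0` all functions involved are `C¹` or continuous, so
this is done on `[e, t]` (`setLIntegral_sq_le`), and then `e ↓ 0` by monotone convergence.

*Upper bound* (`lam0_le_inv_deltaND`): for a continuous `0 ≤ φ ≤ 1` supported in `[x, y]`, the `C¹`
function `f(z) = ∫_z^y φ e^{-C}` is constant on `[0, x]`, so `μ(f²) ≥ μ(0, x) f(x)²`, whereas
`D(f) = ∫ φ² e^{-C} ≤ f(x)`. Hence `λ₀ μ(0, x) f(x) ≤ 1`, and `f(x)` increases to `ν(x, D)` as `φ`
increases to the indicator function of `(x, D)`.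

For the two last claims: if `ν(0, ∞) = ∞` then `ν(1, ∞) = ∞` while `μ(0, 1) > 0`, so `δ = ∞`; and
`μ(0, x) ν(x, ∞) ≤ ∫_x^∞ μ(0, u) ν(du)` bounds `δ` by `∫ μ(0, u) ν(du)`.
-/

open MeasureTheory Set Filter Topology ENNReal

noncomputable section

/-- The open interval `(0, D)` in `ℝ`, where `D : ℝ≥0∞` may be infinite. -/
def ooI (D : ℝ≥0∞) : Set ℝ := {x : ℝ | 0 < x ∧ ENNReal.ofReal x < D}

/-- The interval `[0, D)` in `ℝ`. -/
def coI (D : ℝ≥0∞) : Set ℝ := {x : ℝ | 0 ≤ x ∧ ENNReal.ofReal x < D}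

/-- The interval `[0, D]` in `ℝ` (conventionally `[0, ∞)` when `D = ∞`). -/
def ccI (D : ℝ≥0∞) : Set ℝ := {x : ℝ | 0 ≤ x ∧ ENNReal.ofReal x ≤ D}

/-- `C(x) = ∫_0^x b(u)/a(u) du`. -/
def Cf (a b : ℝ → ℝ) (x : ℝ) : ℝ := ∫ u in Set.Ioo 0 x, b u / a u

/-- The measure `μ(dx) = (e^{C(x)}/a(x)) dx` on `(0, D)`. -/
def muM (a b : ℝ → ℝ) (D : ℝ≥0∞) : Measure ℝ :=
  (volume.restrict (ooI D)).withDensity fun x => ENNReal.ofReal (Real.exp (Cf a b x) / a x)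

/-- The measure `ν(dx) = e^{-C(x)} dx` on `(0, D)`. -/
def nuM (a b : ℝ → ℝ) (D : ℝ≥0∞) : Measure ℝ :=
  (volume.restrict (ooI D)).withDensity fun x => ENNReal.ofReal (Real.exp (-Cf a b x))

/-- Hypothesis (1.0): `a`, `b` Borel measurable, `a > 0` on `(0,D)`, and `b/a`, `e^C/a`
locally integrable on `[0, D]`. -/
def Hyp (a b : ℝ → ℝ) (D : ℝ≥0∞) : Prop :=
  Measurable a ∧ Measurable b ∧ (∀ x ∈ ooI D, 0 < a x) ∧
    ∀ p : ℝ, 0 ≤ p → ENNReal.ofReal p ≤ D →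
      IntegrableOn (fun u => b u / a u) (Set.Icc 0 p) ∧
      IntegrableOn (fun u => Real.exp (Cf a b u) / a u) (Set.Icc 0 p)

/-- `f ∈ C¹(0,D) ∩ C[0,D]`. -/
def C1C (D : ℝ≥0∞) (f : ℝ → ℝ) : Prop :=
  ContinuousOn f (ccI D) ∧ (∀ x ∈ ooI D, DifferentiableAt ℝ f x) ∧
    ContinuousOn (deriv f) (ooI D)

/-- The Dirichlet form `D(f) = ∫_0^D e^{C} f'^2 dx`. -/
def Dform (a b : ℝ → ℝ) (D : ℝ≥0∞) (f : ℝ → ℝ) : ℝ≥0∞ :=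
  ∫⁻ x in ooI D, ENNReal.ofReal (Real.exp (Cf a b x) * deriv f x ^ 2)

/-- `μ(f²)`. -/
def muL2 (a b : ℝ → ℝ) (D : ℝ≥0∞) (f : ℝ → ℝ) : ℝ≥0∞ :=
  ∫⁻ x, ENNReal.ofReal (f x ^ 2) ∂(muM a b D)

/-- The ND (Neumann at `0`, Dirichlet at `D`) principal eigenvalue `λ₀`, defined with
compactly supported test functions. -/
def lam0 (a b : ℝ → ℝ) (D : ℝ≥0∞) : ℝ≥0∞ :=
  sInf {r | ∃ f : ℝ → ℝ, C1C D f ∧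
    (∃ p : ℝ, 0 ≤ p ∧ ENNReal.ofReal p < D ∧ ∀ x, p < x → f x = 0) ∧
    (D ≠ ∞ → f D.toReal = 0) ∧ muL2 a b D f = 1 ∧ r = Dform a b D f}

/-- `δ = sup_{x ∈ (0,D)} μ(0,x) ν(x,D)`. -/
def deltaND (a b : ℝ → ℝ) (D : ℝ≥0∞) : ℝ≥0∞ :=
  ⨆ x ∈ ooI D, muM a b D (Set.Ioo 0 x) * nuM a b D (Set.Ioi x)

/-! ### The interval `(0, D)`, the function `C` and the measures `μ`, `ν` -/

lemma isOpen_ooI (D : ℝ≥0∞) : IsOpen (ooI D) :=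
  (isOpen_Ioi (a := (0 : ℝ))).inter (isOpen_Iio.preimage ENNReal.continuous_ofReal)

lemma measurableSet_ooI (D : ℝ≥0∞) : MeasurableSet (ooI D) := (isOpen_ooI D).measurableSet

lemma mem_ooI_of_le {D : ℝ≥0∞} {x p : ℝ} (hx : 0 < x) (hxp : x ≤ p)
    (hp : ENNReal.ofReal p < D) : x ∈ ooI D :=
  ⟨hx, (ENNReal.ofReal_le_ofReal hxp).trans_lt hp⟩

lemma exists_gt_ofReal_lt {D : ℝ≥0∞} {x : ℝ} (hx : 0 ≤ x) (h : ENNReal.ofReal x < D) :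
    ∃ p, x < p ∧ ENNReal.ofReal p < D := by
  obtain ⟨q, hq1, hq2⟩ := exists_between h
  refine ⟨q.toReal, ?_, ?_⟩
  · exact (ENNReal.ofReal_lt_iff_lt_toReal hx hq2.ne_top).1 hq1
  · rwa [ENNReal.ofReal_toReal hq2.ne_top]

lemma continuousOn_Cf_Icc {a b : ℝ → ℝ} {D : ℝ≥0∞} (hyp : Hyp a b D) {p : ℝ} (hp0 : 0 ≤ p)
    (hp : ENNReal.ofReal p ≤ D) : ContinuousOn (Cf a b) (Icc 0 p) :=
  (intervalIntegral.continuousOn_primitive (hyp.2.2.2 p hp0 hp).1).congr fun _ _ =>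
    integral_Ioc_eq_integral_Ioo.symm

lemma continuousOn_Cf {a b : ℝ → ℝ} {D : ℝ≥0∞} (hyp : Hyp a b D) :
    ContinuousOn (Cf a b) (ooI D) := by
  intro x hx
  obtain ⟨p, hxp, hp⟩ := exists_gt_ofReal_lt hx.1.le hx.2
  exact ((continuousOn_Cf_Icc hyp (hx.1.trans hxp).le hp.le).continuousAt
    (Icc_mem_nhds hx.1 hxp)).continuousWithinAt

lemma nuM_apply {a b : ℝ → ℝ} {D : ℝ≥0∞} {s : Set ℝ} (hs : MeasurableSet s) :
    nuM a b D s = ∫⁻ x in s ∩ ooI D, ENNReal.ofReal (Real.exp (-Cf a b x)) := by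
  rw [nuM, withDensity_apply _ hs, Measure.restrict_restrict hs]

lemma muM_apply {a b : ℝ → ℝ} {D : ℝ≥0∞} {s : Set ℝ} (hs : MeasurableSet s) :
    muM a b D s = ∫⁻ x in s ∩ ooI D, ENNReal.ofReal (Real.exp (Cf a b x) / a x) := by
  rw [muM, withDensity_apply _ hs, Measure.restrict_restrict hs]

/-- `μ` is carried by `(0, D)`, so the half-line produced by Tonelli's theorem can be replaced by
`(0, u)`. -/
lemma muM_Iio_eq {a b : ℝ → ℝ} {D : ℝ≥0∞} (u : ℝ) :
    muM a b D (Iio u) = muM a b D (Ioo 0 u) := by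
  rw [muM_apply measurableSet_Iio, muM_apply measurableSet_Ioo]
  congr 2
  ext y
  exact ⟨fun h => ⟨⟨h.2.1, h.1⟩, h.2⟩, fun h => ⟨h.1.2, h.2⟩⟩

instance {a b : ℝ → ℝ} {D : ℝ≥0∞} : SFinite (muM a b D) := by unfold muM; infer_instance

lemma continuousOn_exp_neg_Cf {a b : ℝ → ℝ} {D : ℝ≥0∞} (hyp : Hyp a b D) :
    ContinuousOn (fun x => Real.exp (-Cf a b x)) (ooI D) :=
  (continuousOn_Cf hyp).neg.rexp

lemma Icc_subset_ooI {D : ℝ≥0∞} {x p : ℝ} (hx : 0 < x) (hp : ENNReal.ofReal p < D) :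
    Icc x p ⊆ ooI D := fun _ hy => mem_ooI_of_le (hx.trans_le hy.1) hy.2 hp

lemma setLIntegral_Ioc_eq_ofReal {g : ℝ → ℝ} {s t : ℝ} (hst : s ≤ t)
    (hg : ContinuousOn g (Icc s t)) (h0 : ∀ x ∈ Icc s t, 0 ≤ g x) :
    ∫⁻ x in Ioc s t, ENNReal.ofReal (g x) = ENNReal.ofReal (∫ x in s..t, g x) := by
  rw [intervalIntegral.integral_of_le hst, ofReal_integral_eq_lintegral_ofReal]
  · exact (hg.integrableOn_Icc).mono_set Ioc_subset_Icc_self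
  · exact (ae_restrict_mem measurableSet_Ioc).mono fun x hx => h0 x (Ioc_subset_Icc_self hx)

/-! ### The Hardy inequality and the lower bound for `λ₀` -/

/-- A weighted Hardy inequality on a compact interval. With `N(x) = ∫_x^q w`, so that
`(1 / N)' = w / N²`, the inequality follows by integrating
`(f² / N)' ≥ f² w / (2 N²) - 2 f'² / w` and using
`2 |f f'| / N ≤ f² w / (2 N²) + 2 f'² / w`. -/
lemma hardy_Icc {w f f' : ℝ → ℝ} {s t q : ℝ} {U : Set ℝ} (hU : IsOpen U) (hst : s ≤ t)
    (htq : t < q) (hsub : Icc s q ⊆ U) (hw : ContinuousOn w U) (hw0 : ∀ x ∈ U, 0 < w x)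
    (hf : ∀ x ∈ U, HasDerivAt f (f' x) x) (hf' : ContinuousOn f' U) (hft : f t = 0) :
    ∫ x in s..t, 2 * |f x * f' x| / (∫ u in x..q, w u) ≤ 4 * ∫ x in s..t, (w x)⁻¹ * f' x ^ 2 := by
  set N : ℝ → ℝ := fun x => ∫ u in x..q, w u with hN
  have hst' : Icc s t ⊆ Icc s q := Icc_subset_Icc_right htq.le
  have hUt : Icc s t ⊆ U := hst'.trans hsub
  have hfc : ContinuousOn f U := fun x hx => (hf x hx).continuousAt.continuousWithinAt
  have hNpos : ∀ x ∈ Icc s t, 0 < N x := by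
    intro x hx
    have hxq : x < q := hx.2.trans_lt htq
    have hsx : Icc x q ⊆ U := (Icc_subset_Icc_left hx.1).trans hsub
    exact intervalIntegral.intervalIntegral_pos_of_pos_on
      ((hw.mono hsx).intervalIntegrable_of_Icc hxq.le)
      (fun y hy => hw0 y (hsx (Ioo_subset_Icc_self hy))) hxq
  have hNd : ∀ x ∈ Icc s t, HasDerivAt N (-w x) x := by
    intro x hx
    have hxq : x < q := hx.2.trans_lt htq
    have hsx : Icc x q ⊆ U := (Icc_subset_Icc_left hx.1).trans hsub
    exact intervalIntegral.integral_hasDerivAt_left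
      ((hw.mono hsx).intervalIntegrable_of_Icc hxq.le)
      (hw.stronglyMeasurableAtFilter hU x (hUt hx))
      (hw.continuousAt (hU.mem_nhds (hUt hx)))
  have hNc : ContinuousOn N (Icc s t) := fun x hx => (hNd x hx).continuousAt.continuousWithinAt
  have hw' := hw.mono hUt
  have hfc' := hfc.mono hUt
  have hf'' := hf'.mono hUt
  have hNne : ∀ x ∈ Icc s t, N x ≠ 0 := fun x hx => (hNpos x hx).ne'
  have hwne : ∀ x ∈ Icc s t, w x ≠ 0 := fun x hx => (hw0 x (hUt hx)).ne'
  have hA : ContinuousOn (fun x => f x ^ 2 * w x / N x ^ 2) (Icc s t) :=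
    ((hfc'.pow 2).mul hw').div (hNc.pow 2) fun x hx => pow_ne_zero 2 (hNne x hx)
  have hB : ContinuousOn (fun x => (w x)⁻¹ * f' x ^ 2) (Icc s t) :=
    (hw'.inv₀ hwne).mul (hf''.pow 2)
  have hJ : ContinuousOn (fun x => 2 * |f x * f' x| / N x) (Icc s t) :=
    ((hfc'.mul hf'').abs.const_mul 2).div hNc hNne
  have hG : ContinuousOn (fun x => 2 * (f x * f' x) / N x + f x ^ 2 * w x / N x ^ 2) (Icc s t) :=
    (((hfc'.mul hf'').const_mul 2).div hNc hNne).add hA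
  have hAi := hA.intervalIntegrable_of_Icc (μ := volume) hst
  have hBi := hB.intervalIntegrable_of_Icc (μ := volume) hst
  have hJi := hJ.intervalIntegrable_of_Icc (μ := volume) hst
  have hGi := hG.intervalIntegrable_of_Icc (μ := volume) hst
  -- The integrand is the derivative of `f² / N`.
  have hftc : ∫ x in s..t, (2 * (f x * f' x) / N x + f x ^ 2 * w x / N x ^ 2)
      = f t ^ 2 / N t - f s ^ 2 / N s := by
    refine intervalIntegral.integral_eq_sub_of_hasDerivAt (f := fun x => f x ^ 2 / N x) ?_ hGi
    intro x hx
    rw [uIcc_of_le hst] at hx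
    have := ((hf x (hUt hx)).pow 2).div (hNd x hx) (hNne x hx)
    refine this.congr_deriv ?_
    have := hNne x hx
    simp only [Pi.pow_apply, Nat.cast_ofNat]
    field_simp
    ring
  have hyoung : ∀ x ∈ Icc s t, 2 * |f x * f' x| / N x ≤
      1 / 2 * (f x ^ 2 * w x / N x ^ 2) + 2 * ((w x)⁻¹ * f' x ^ 2) := by
    intro x hx
    have h1 := hNpos x hx
    have h2 := hw0 x (hUt hx)
    have : 1 / 2 * (f x ^ 2 * w x / N x ^ 2) + 2 * ((w x)⁻¹ * f' x ^ 2) - 2 * |f x * f' x| / N x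
        = (w x)⁻¹ / 2 * (|f x| * w x / N x - 2 * |f' x|) ^ 2 := by
      rw [abs_mul, ← sq_abs (f x), ← sq_abs (f' x)]
      field_simp
      ring
    have h3 : 0 ≤ (w x)⁻¹ / 2 * (|f x| * w x / N x - 2 * |f' x|) ^ 2 := by positivity
    linarith
  -- With `A = ∫ f² w / N²`, `E = ∫ f'² / w` and `J = ∫ 2 |f f'| / N`: `J ≤ A / 2 + 2 E`.
  have h1 : ∫ x in s..t, 2 * |f x * f' x| / N x ≤
      1 / 2 * (∫ x in s..t, f x ^ 2 * w x / N x ^ 2) + 2 * ∫ x in s..t, (w x)⁻¹ * f' x ^ 2 := by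
    rw [← intervalIntegral.integral_const_mul, ← intervalIntegral.integral_const_mul,
      ← intervalIntegral.integral_add (hAi.const_mul _) (hBi.const_mul _)]
    exact intervalIntegral.integral_mono_on hst hJi ((hAi.const_mul _).add (hBi.const_mul _)) hyoung
  -- The boundary terms are nonpositive because `f t = 0`, so `A / 2 ≤ 2 E`.
  have h2 : 1 / 2 * (∫ x in s..t, f x ^ 2 * w x / N x ^ 2) - 2 * (∫ x in s..t, (w x)⁻¹ * f' x ^ 2)
      ≤ f t ^ 2 / N t - f s ^ 2 / N s := by
    rw [← hftc, ← intervalIntegral.integral_const_mul, ← intervalIntegral.integral_const_mul,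
      ← intervalIntegral.integral_sub (hAi.const_mul _) (hBi.const_mul _)]
    refine intervalIntegral.integral_mono_on hst ((hAi.const_mul _).sub (hBi.const_mul _)) hGi ?_
    intro x hx
    have h3 := hyoung x hx
    have h4 : -(2 * |f x * f' x| / N x) ≤ 2 * (f x * f' x) / N x := by
      rw [← neg_div]
      have := hNpos x hx
      gcongr
      linarith [neg_abs_le (f x * f' x)]
    linarith
  have h3 : 0 ≤ f s ^ 2 / N s := by have := hNpos s (left_mem_Icc.2 hst); positivity
  rw [hft] at h2
  simp only [ne_eq, OfNat.ofNat_ne_zero, not_false_eq_true, zero_pow, zero_div] at h2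
  linarith

lemma C1C.hasDerivAt {D : ℝ≥0∞} {f : ℝ → ℝ} (hf : C1C D f) :
    ∀ x ∈ ooI D, HasDerivAt f (deriv f x) x := fun x hx => (hf.2.1 x hx).hasDerivAt

/-- The bound `μ(0, u) N(u) ≤ δ` for the truncated tail `N(u) = ∫_u^q e^{-C}`. -/
lemma muM_mul_tail_le {a b : ℝ → ℝ} {D : ℝ≥0∞} (hyp : Hyp a b D) {u q : ℝ} (hu : 0 < u)
    (huq : u ≤ q) (hq : ENNReal.ofReal q < D) :
    muM a b D (Ioo 0 u) * ENNReal.ofReal (∫ v in u..q, Real.exp (-Cf a b v)) ≤ deltaND a b D := by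
  refine le_trans ?_ (le_iSup₂_of_le (f := fun x _ => muM a b D (Ioo 0 x) * nuM a b D (Ioi x))
    u (mem_ooI_of_le hu huq hq) le_rfl)
  gcongr
  rw [← setLIntegral_Ioc_eq_ofReal huq ((continuousOn_exp_neg_Cf hyp).mono (Icc_subset_ooI hu hq))
    fun _ _ => (Real.exp_pos _).le, nuM_apply measurableSet_Ioi]
  refine lintegral_mono_set fun y hy => ⟨hy.1, mem_ooI_of_le (hu.trans hy.1) hy.2 hq⟩

/-- The Hardy inequality away from the endpoint `0`: here `f(x)²` is bounded by `∫_x^t 2|f f'|`,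
Tonelli's theorem produces the factor `μ(0, u)`, and `μ(0, u) ≤ δ / ∫_u^q e^{-C}` reduces the claim
to `hardy_Icc`. -/
lemma setLIntegral_sq_le {a b : ℝ → ℝ} {D : ℝ≥0∞} (hyp : Hyp a b D) {f : ℝ → ℝ} (hf : C1C D f)
    {e t q : ℝ} (he : 0 < e) (het : e ≤ t) (htq : t < q) (hq : ENNReal.ofReal q < D)
    (hft : ∀ x, t ≤ x → f x = 0) :
    ∫⁻ x in Ioi e, ENNReal.ofReal (f x ^ 2) ∂(muM a b D) ≤ 4 * deltaND a b D * Dform a b D f := by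
  have hsub : Icc e q ⊆ ooI D := Icc_subset_ooI he hq
  have hsubt : Icc e t ⊆ ooI D := (Icc_subset_Icc_right htq.le).trans hsub
  have hfc : ContinuousOn f (ooI D) := fun x hx =>
    (hf.hasDerivAt x hx).continuousAt.continuousWithinAt
  set k : ℝ → ℝ≥0∞ := fun u => ENNReal.ofReal (2 * |f u * deriv f u|) with hk
  have hkc : ContinuousOn (fun u => 2 * |f u * deriv f u|) (ooI D) :=
    (hfc.mul hf.2.2).abs.const_mul 2
  have hkm : AEMeasurable k (volume.restrict (Ioc e t)) :=
    ((hkc.mono (Ioc_subset_Icc_self.trans hsubt)).aemeasurable measurableSet_Ioc).ennreal_ofReal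
  have hpt : ∀ x ∈ Ioi e, ENNReal.ofReal (f x ^ 2) ≤
      ∫⁻ u in Ioc e t, (Ioi x).indicator k u := by
    intro x hx
    rcases le_or_gt t x with htx | hxt
    · simp [hft x htx]
    have hx0 : 0 < x := he.trans hx
    have hsx : Icc x t ⊆ ooI D := (Icc_subset_Icc_left (le_of_lt hx)).trans hsubt
    have h1 : ∫ u in x..t, 2 * (f u * deriv f u) = f t ^ 2 - f x ^ 2 := by
      refine intervalIntegral.integral_eq_sub_of_hasDerivAt (f := fun u => f u ^ 2) ?_ ?_
      · intro u hu
        rw [uIcc_of_le hxt.le] at hu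
        refine ((hf.hasDerivAt u (hsx hu)).pow 2).congr_deriv ?_
        push_cast
        ring
      · exact (((hfc.mul hf.2.2).const_mul 2).mono hsx).intervalIntegrable_of_Icc hxt.le
    have h2 : f x ^ 2 ≤ ∫ u in x..t, 2 * |f u * deriv f u| := by
      rw [hft t le_rfl] at h1
      have : f x ^ 2 = ∫ u in x..t, -(2 * (f u * deriv f u)) := by
        rw [intervalIntegral.integral_neg, h1]; ring
      rw [this]
      refine intervalIntegral.integral_mono_on hxt.le ?_ ?_ fun u _ => ?_
      · exact (((hfc.mul hf.2.2).const_mul 2).mono hsx).neg.intervalIntegrable_of_Icc hxt.le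
      · exact (hkc.mono hsx).intervalIntegrable_of_Icc hxt.le
      · linarith [neg_abs_le (f u * deriv f u)]
    refine (ENNReal.ofReal_le_ofReal h2).trans ?_
    rw [← setLIntegral_Ioc_eq_ofReal hxt.le (hkc.mono hsx) fun u _ => by positivity,
      setLIntegral_indicator measurableSet_Ioi]
    exact lintegral_mono_set fun y hy => ⟨hy.1, lt_trans hx hy.1, hy.2⟩
  have hNpos : ∀ x ∈ Icc e t, 0 < ∫ v in x..q, Real.exp (-Cf a b v) := fun x hx =>
    intervalIntegral.intervalIntegral_pos_of_pos_on
      (((continuousOn_exp_neg_Cf hyp).mono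
        ((Icc_subset_Icc_left hx.1).trans hsub)).intervalIntegrable_of_Icc (hx.2.trans htq.le))
      (fun y _ => Real.exp_pos _) (hx.2.trans_lt htq)
  have hNc : ContinuousOn (fun x => ∫ v in x..q, Real.exp (-Cf a b v)) (Icc e t) := by
    intro x hx
    exact (intervalIntegral.integral_hasDerivAt_left
      (((continuousOn_exp_neg_Cf hyp).mono
        ((Icc_subset_Icc_left hx.1).trans hsub)).intervalIntegrable_of_Icc (hx.2.trans htq.le))
      ((continuousOn_exp_neg_Cf hyp).stronglyMeasurableAtFilter (isOpen_ooI D) x (hsubt hx))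
      ((continuousOn_exp_neg_Cf hyp).continuousAt
        ((isOpen_ooI D).mem_nhds (hsubt hx)))).continuousAt.continuousWithinAt
  have hJc : ContinuousOn
      (fun u => 2 * |f u * deriv f u| / ∫ v in u..q, Real.exp (-Cf a b v)) (Icc e t) :=
    (hkc.mono hsubt).div hNc fun x hx => (hNpos x hx).ne'
  have hhardy : ∫⁻ u in Ioc e t,
      ENNReal.ofReal (2 * |f u * deriv f u| / ∫ v in u..q, Real.exp (-Cf a b v))
      ≤ 4 * Dform a b D f := by
    have h := hardy_Icc (isOpen_ooI D) het htq hsub (continuousOn_exp_neg_Cf hyp)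
      (fun _ _ => Real.exp_pos _) hf.hasDerivAt hf.2.2 (hft t le_rfl)
    -- Turn `(e^{-C})⁻¹` into `e^C`, leaving the other occurrences of `e^{-C}` unchanged.
    simp only [Real.exp_neg, inv_inv] at h
    simp only [← Real.exp_neg] at h
    rw [setLIntegral_Ioc_eq_ofReal het hJc
      fun x hx => by have := hNpos x hx; positivity]
    refine (ENNReal.ofReal_le_ofReal h).trans ?_
    rw [ENNReal.ofReal_mul (by norm_num), ENNReal.ofReal_ofNat,
      ← setLIntegral_Ioc_eq_ofReal (g := fun x => Real.exp (Cf a b x) * deriv f x ^ 2) het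
        ((((continuousOn_Cf hyp).rexp).mul (hf.2.2.pow 2)).mono hsubt)
        fun x _ => by positivity]
    gcongr
    exact lintegral_mono_set (Ioc_subset_Icc_self.trans hsubt)
  calc ∫⁻ x in Ioi e, ENNReal.ofReal (f x ^ 2) ∂(muM a b D)
      ≤ ∫⁻ x in Ioi e, (∫⁻ u in Ioc e t, (Ioi x).indicator k u) ∂(muM a b D) :=
        setLIntegral_mono' measurableSet_Ioi hpt
    _ ≤ ∫⁻ x, (∫⁻ u in Ioc e t, (Ioi x).indicator k u) ∂(muM a b D) :=
        setLIntegral_le_lintegral _ _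
    _ = ∫⁻ u in Ioc e t, (∫⁻ x, (Ioi x).indicator k u ∂(muM a b D)) := by
        refine lintegral_lintegral_swap ?_
        have h1 : AEMeasurable (fun z : ℝ × ℝ => k z.2)
            ((muM a b D).prod (volume.restrict (Ioc e t))) := hkm.comp_snd
        exact h1.indicator (measurableSet_lt measurable_fst measurable_snd)
    _ = ∫⁻ u in Ioc e t, k u * muM a b D (Ioo 0 u) := by
        refine lintegral_congr fun u => ?_
        rw [← muM_Iio_eq, ← lintegral_indicator_const measurableSet_Iio]
        rfl
    _ ≤ ∫⁻ u in Ioc e t, deltaND a b D *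
          ENNReal.ofReal (2 * |f u * deriv f u| / ∫ v in u..q, Real.exp (-Cf a b v)) := by
        refine setLIntegral_mono' measurableSet_Ioc fun u hu => ?_
        have hu0 : 0 < u := he.trans hu.1
        have huq : u < q := hu.2.trans_lt htq
        have hNpos := hNpos u (Ioc_subset_Icc_self hu)
        set N := ∫ v in u..q, Real.exp (-Cf a b v)
        have : k u = ENNReal.ofReal N * ENNReal.ofReal (2 * |f u * deriv f u| / N) := by
          rw [← ENNReal.ofReal_mul hNpos.le, mul_div_cancel₀ _ hNpos.ne']
        rw [this, mul_comm, ← mul_assoc]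
        gcongr
        exact muM_mul_tail_le hyp hu0 huq.le hq
    _ ≤ deltaND a b D * (4 * Dform a b D f) := by
        rw [lintegral_const_mul'']
        · gcongr
        · exact ((hJc.mono Ioc_subset_Icc_self).aemeasurable measurableSet_Ioc).ennreal_ofReal
    _ = _ := by ring

/-- The weighted Hardy inequality `μ(f²) ≤ 4 δ D(f)`, which is the lower bound for `λ₀`. -/
lemma muL2_le {a b : ℝ → ℝ} {D : ℝ≥0∞} (hyp : Hyp a b D) {f : ℝ → ℝ} (hf : C1C D f)
    {p : ℝ} (hp0 : 0 ≤ p) (hp : ENNReal.ofReal p < D) (hfp : ∀ x, p < x → f x = 0) :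
    muL2 a b D f ≤ 4 * deltaND a b D * Dform a b D f := by
  obtain ⟨t, hpt, ht⟩ := exists_gt_ofReal_lt hp0 hp
  have ht0 : 0 < t := hp0.trans_lt hpt
  obtain ⟨q, htq, hq⟩ := exists_gt_ofReal_lt ht0.le ht
  have hU : muM a b D (Iic 0) = 0 := by
    rw [muM_apply measurableSet_Iic]
    have : Iic 0 ∩ ooI D = ∅ := by
      ext y
      simp only [mem_inter_iff, mem_Iic, mem_empty_iff_false, iff_false, not_and]
      exact fun h h' => absurd h'.1 (not_lt.2 h)
    simp [this]
  have hae : ∀ᵐ x ∂(muM a b D), x ∈ Ioi (0 : ℝ) := by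
    rw [ae_iff]
    convert hU using 2
    ext y
    simp
  have hun : (Ioi (0 : ℝ)) = ⋃ n : ℕ, Ioi (t / (n + 1)) := by
    ext y
    simp only [mem_Ioi, mem_iUnion]
    constructor
    · intro hy
      obtain ⟨n, hn⟩ := exists_nat_gt (t / y)
      refine ⟨n, ?_⟩
      rw [div_lt_iff₀ hy] at hn
      rw [div_lt_iff₀ (by positivity)]
      nlinarith
    · rintro ⟨n, hn⟩
      exact lt_trans (by positivity) hn
  have hmono : Monotone fun n : ℕ => Ioi (t / (n + 1 : ℝ)) := by
    intro m n hmn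
    refine Ioi_subset_Ioi ?_
    gcongr
  rw [muL2, ← Measure.restrict_eq_self_of_ae_mem hae, hun, setLIntegral_iUnion_of_directed _
    hmono.directed_le]
  refine iSup_le fun n => ?_
  refine setLIntegral_sq_le hyp hf (by positivity) ?_ htq hq fun x hx => hfp x (hpt.trans_le hx)
  exact div_le_self ht0.le (by linarith [(Nat.cast_nonneg n : (0 : ℝ) ≤ n)])

/-! ### Test functions and the upper bound for `λ₀` -/

lemma muM_Ioo_lt_top {a b : ℝ → ℝ} {D : ℝ≥0∞} (hyp : Hyp a b D) {p : ℝ} (hp0 : 0 ≤ p)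
    (hp : ENNReal.ofReal p ≤ D) : muM a b D (Ioo 0 p) < ∞ := by
  rw [muM_apply measurableSet_Ioo]
  exact ((hyp.2.2.2 p hp0 hp).2.mono_set fun x hx => Ioo_subset_Icc_self hx.1).setLIntegral_lt_top

lemma muM_Ioo_ne_zero {a b : ℝ → ℝ} {D : ℝ≥0∞} (hyp : Hyp a b D) {p : ℝ} (hp0 : 0 < p)
    (hp : ENNReal.ofReal p < D) : muM a b D (Ioo 0 p) ≠ 0 := by
  have hsub : Ioo 0 p ⊆ ooI D := fun x hx => mem_ooI_of_le hx.1 hx.2.le hp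
  rw [muM_apply measurableSet_Ioo, inter_eq_left.2 hsub]
  intro h
  have hi := (hyp.2.2.2 p hp0.le hp.le).2.mono_set Ioo_subset_Icc_self
  rw [lintegral_eq_zero_iff' hi.aestronglyMeasurable.aemeasurable.ennreal_ofReal] at h
  have : ∀ᵐ x ∂(volume.restrict (Ioo 0 p)), False := by
    filter_upwards [h, ae_restrict_mem measurableSet_Ioo] with x hx hx'
    have h1 : 0 < Real.exp (Cf a b x) / a x := div_pos (Real.exp_pos _) (hyp.2.2.1 x (hsub hx'))
    exact absurd (ENNReal.ofReal_eq_zero.1 hx) (not_le.2 h1)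
  rw [Filter.eventually_false_iff_eq_bot, ae_eq_bot, Measure.restrict_eq_zero, Real.volume_Ioo,
    ENNReal.ofReal_eq_zero] at this
  linarith

lemma nuM_Ioc_eq {a b : ℝ → ℝ} {D : ℝ≥0∞} {s t : ℝ} (hs : 0 ≤ s)
    (ht : ENNReal.ofReal t < D) :
    nuM a b D (Ioc s t) = ∫⁻ x in Ioc s t, ENNReal.ofReal (Real.exp (-Cf a b x)) := by
  rw [nuM_apply measurableSet_Ioc, inter_eq_left.2]
  exact fun x hx => mem_ooI_of_le (hs.trans_lt hx.1) hx.2 ht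

/-- The Rayleigh quotient bound for a test function that is not normalised. -/
lemma lam0_mul_le {a b : ℝ → ℝ} {D : ℝ≥0∞} {f : ℝ → ℝ} (hf : C1C D f)
    {p : ℝ} (hp0 : 0 ≤ p) (hp : ENNReal.ofReal p < D) (hfp : ∀ x, p < x → f x = 0)
    (hfin : muL2 a b D f ≠ ∞) : lam0 a b D * muL2 a b D f ≤ Dform a b D f := by
  rcases eq_or_ne (muL2 a b D f) 0 with h0 | h0
  · simp [h0]
  set m := (muL2 a b D f).toReal with hm
  have hmpos : 0 < m := ENNReal.toReal_pos h0 hfin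
  have hmm : muL2 a b D f = ENNReal.ofReal m := (ENNReal.ofReal_toReal hfin).symm
  set c := Real.sqrt m⁻¹ with hc
  have hc2 : c ^ 2 = m⁻¹ := Real.sq_sqrt (by positivity)
  have hder : ∀ x ∈ ooI D, HasDerivAt (fun y => c * f y) (c * deriv f x) x :=
    fun x hx => (hf.hasDerivAt x hx).const_mul c
  have h1 : muL2 a b D (fun y => c * f y) = 1 := by
    have : muL2 a b D (fun y => c * f y) = ENNReal.ofReal m⁻¹ * muL2 a b D f := by
      rw [muL2, muL2, ← lintegral_const_mul' _ _ ENNReal.ofReal_ne_top]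
      refine lintegral_congr fun x => ?_
      rw [mul_pow, hc2, ENNReal.ofReal_mul (by positivity)]
    rw [this, hmm, ← ENNReal.ofReal_mul (by positivity), inv_mul_cancel₀ hmpos.ne',
      ENNReal.ofReal_one]
  have h2 : Dform a b D (fun y => c * f y) = ENNReal.ofReal m⁻¹ * Dform a b D f := by
    rw [Dform, Dform, ← lintegral_const_mul' _ _ ENNReal.ofReal_ne_top]
    refine setLIntegral_congr_fun (measurableSet_ooI D) fun x hx => ?_
    rw [(hder x hx).deriv, mul_pow, hc2, mul_left_comm, ENNReal.ofReal_mul (by positivity)]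
  have h3 : lam0 a b D ≤ ENNReal.ofReal m⁻¹ * Dform a b D f := by
    rw [← h2]
    refine sInf_le ⟨fun y => c * f y, ⟨hf.1.const_smul c, fun x hx =>
      (hder x hx).differentiableAt, ?_⟩, ⟨p, hp0, hp, fun x hx => by simp [hfp x hx]⟩, ?_, h1, rfl⟩
    · exact (hf.2.2.const_smul c).congr fun x hx => (hder x hx).deriv
    · intro hD
      have : p < D.toReal := (ENNReal.ofReal_lt_iff_lt_toReal hp0 hD).1 hp
      simp [hfp _ this]
  calc lam0 a b D * muL2 a b D f ≤ (ENNReal.ofReal m⁻¹ * Dform a b D f) * ENNReal.ofReal m := by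
        rw [hmm]; gcongr
    _ = ENNReal.ofReal (m⁻¹ * m) * Dform a b D f := by
        rw [ENNReal.ofReal_mul (by positivity)]; ring
    _ = Dform a b D f := by rw [inv_mul_cancel₀ hmpos.ne']; simp

/-- Testing `λ₀` with `f(z) = ∫_z^y φ e^{-C}`, where `φ` is a continuous trapezoid equal to `1` on
`[s, t]` and supported in `[x, y]`. This `f` is constant on `[0, x]`, whence
`μ(f²) ≥ μ(0, x) f(x)²`, and `D(f) = ∫ φ² e^{-C} ≤ ∫ φ e^{-C} = f(x)` because `0 ≤ φ ≤ 1`. -/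
lemma lam0_mul_muM_mul_nuM_Ioc_le {a b : ℝ → ℝ} {D : ℝ≥0∞} (hyp : Hyp a b D) {x s t : ℝ}
    (hx : 0 < x) (hxs : x < s) (ht : ENNReal.ofReal t < D) :
    lam0 a b D * (muM a b D (Ioo 0 x) * nuM a b D (Ioc s t)) ≤ 1 := by
  rcases lt_or_ge t s with hts | hst
  · simp [Ioc_eq_empty (not_lt.2 hts.le)]
  have hs0 : 0 < s := hx.trans hxs
  have ht0 : 0 < t := hs0.trans_le hst
  -- `φ` vanishes beyond `y`; the further point `q` only serves to bound `μ(f²)` by `f(x)² μ(0, q)`.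
  obtain ⟨y, hty, hy⟩ := exists_gt_ofReal_lt ht0.le ht
  have hy0 : 0 < y := ht0.trans hty
  have hxy : x ≤ y := by linarith
  obtain ⟨q, hyq, hq⟩ := exists_gt_ofReal_lt hy0.le hy
  set φ : ℝ → ℝ := fun u => min 1 (max 0 (min ((u - x) / (s - x)) ((y - u) / (y - t)))) with hφ
  have hφc : Continuous φ := by fun_prop
  have hφ0 : ∀ u, 0 ≤ φ u := fun u => le_min zero_le_one (le_max_left _ _)
  have hφ1 : ∀ u, φ u ≤ 1 := fun u => min_le_left _ _
  have hsx : 0 < s - x := by linarith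
  have hyt : 0 < y - t := by linarith
  have hφx : ∀ u, u ≤ x → φ u = 0 := by
    intro u hu
    have h1 : (u - x) / (s - x) ≤ 0 := div_nonpos_of_nonpos_of_nonneg (by linarith) hsx.le
    simp only [hφ]
    rw [max_eq_left ((min_le_left _ _).trans h1)]
    simp
  have hφy : ∀ u, y ≤ u → φ u = 0 := by
    intro u hu
    have h1 : (y - u) / (y - t) ≤ 0 := div_nonpos_of_nonpos_of_nonneg (by linarith) hyt.le
    simp only [hφ]
    rw [max_eq_left ((min_le_right _ _).trans h1)]
    simp
  have hφst : ∀ u ∈ Ioc s t, φ u = 1 := by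
    intro u hu
    refine min_eq_left (le_max_of_le_right (le_min ?_ ?_))
    · rw [le_div_iff₀ hsx]; linarith [hu.1]
    · rw [le_div_iff₀ hyt]; linarith [hu.2]
  set g : ℝ → ℝ := fun u => φ u * Real.exp (-Cf a b u) with hg
  -- `e^{-C}` is continuous on `(0, D)` only, but `φ` vanishes outside `[x, y]`.
  have hgc : Continuous g := by
    rw [continuous_iff_continuousAt]
    intro u
    by_cases hu : u ∈ Icc x y
    · exact hφc.continuousAt.mul ((continuousOn_exp_neg_Cf hyp).continuousAt
        ((isOpen_ooI D).mem_nhds (Icc_subset_ooI hx hy hu)))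
    · have : g =ᶠ[𝓝 u] fun _ => 0 := by
        filter_upwards [isClosed_Icc.isOpen_compl.mem_nhds hu] with v hv
        rw [mem_compl_iff, mem_Icc, not_and_or, not_le, not_le] at hv
        rcases hv with hv | hv
        · simp [hg, hφx v hv.le]
        · simp [hg, hφy v hv.le]
      exact continuousAt_const.congr this.symm
  have hg0 : ∀ u, 0 ≤ g u := fun u => mul_nonneg (hφ0 u) (Real.exp_pos _).le
  set f : ℝ → ℝ := fun z => ∫ u in z..y, g u with hfdef
  have hfd : ∀ z, HasDerivAt f (-g z) z := fun z =>
    intervalIntegral.integral_hasDerivAt_left (hgc.intervalIntegrable _ _)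
      (hgc.stronglyMeasurableAtFilter _ _) hgc.continuousAt
  have hfderiv : deriv f = fun z => -g z := funext fun z => (hfd z).deriv
  have hfc : Continuous f := continuous_iff_continuousAt.2 fun z => (hfd z).continuousAt
  have hf : C1C D f := ⟨hfc.continuousOn, fun z _ => (hfd z).differentiableAt, by
    rw [hfderiv]; exact hgc.neg.continuousOn⟩
  have hanti : Antitone f := antitone_of_deriv_nonpos (fun z => (hfd z).differentiableAt)
    fun z => by rw [hfderiv]; simpa using hg0 z
  have hfy : ∀ z, y < z → f z = 0 := by
    intro z hz
    have : ∫ u in z..y, g u = ∫ u in z..y, (0 : ℝ) := by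
      refine intervalIntegral.integral_congr fun u hu => ?_
      rw [uIcc_of_ge hz.le] at hu
      simp [hg, hφy u hu.1]
    rw [hfdef]; simp only; rw [this]; simp
  have hfx : ∀ z, z ≤ x → f z = f x := by
    intro z hz
    have h1 : ∫ u in z..x, g u = ∫ u in z..x, (0 : ℝ) := by
      refine intervalIntegral.integral_congr fun u hu => ?_
      rw [uIcc_of_le hz] at hu
      simp [hg, hφx u hu.2]
    have h2 := intervalIntegral.integral_add_adjacent_intervals
      (hgc.intervalIntegrable (μ := volume) z x) (hgc.intervalIntegrable x y)
    rw [h1] at h2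
    simpa using h2.symm
  have hF : ENNReal.ofReal (f x) = ∫⁻ u in Ioc x y, ENNReal.ofReal (g u) :=
    (setLIntegral_Ioc_eq_ofReal hxy hgc.continuousOn fun u _ => hg0 u).symm
  have hfnn : ∀ z, 0 ≤ f z := by
    intro z
    rw [← hfy (max z y + 1) (by linarith [le_max_right z y])]
    exact hanti (by linarith [le_max_left z y])
  have hfle : ∀ z, f z ≤ f x := by
    intro z
    rcases le_total z x with h | h
    · exact (hfx z h).le
    · exact hanti h
  have hD : Dform a b D f ≤ ENNReal.ofReal (f x) := by
    rw [hF, Dform, ← lintegral_indicator (measurableSet_ooI D),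
      ← lintegral_indicator measurableSet_Ioc]
    refine lintegral_mono fun u => ?_
    by_cases hu : u ∈ Ioc x y
    · refine (indicator_le_self _ _ u).trans ?_
      rw [indicator_of_mem hu]
      refine ENNReal.ofReal_le_ofReal ?_
      rw [hfderiv]
      have h1 : Real.exp (Cf a b u) * (-g u) ^ 2 = φ u * g u := by
        simp only [hg, Real.exp_neg]
        have := (Real.exp_pos (Cf a b u)).ne'
        field_simp
      rw [h1]
      exact mul_le_of_le_one_left (hg0 u) (hφ1 u)
    · have : g u = 0 := by
        rw [mem_Ioc, not_and_or, not_lt, not_le] at hu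
        rcases hu with hu | hu
        · simp [hg, hφx u hu]
        · simp [hg, hφy u hu.le]
      rw [hfderiv]
      simp [indicator, this]
  have hL2 : muM a b D (Ioo 0 x) * ENNReal.ofReal (f x) ^ 2 ≤ muL2 a b D f := by
    rw [muL2, mul_comm, ← lintegral_indicator_const measurableSet_Ioo]
    refine lintegral_mono fun z => ?_
    by_cases hz : z ∈ Ioo 0 x
    · rw [indicator_of_mem hz, hfx z hz.2.le, ENNReal.ofReal_pow (hfnn x)]
    · simp [hz]
  have hfin : muL2 a b D f ≠ ∞ := by
    have : muL2 a b D f ≤ ENNReal.ofReal (f x ^ 2) * muM a b D (Iio q) := by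
      rw [muL2, ← lintegral_indicator_const measurableSet_Iio]
      refine lintegral_mono fun z => ?_
      by_cases hz : z ∈ Iio q
      · rw [indicator_of_mem hz]
        exact ENNReal.ofReal_le_ofReal (pow_le_pow_left₀ (hfnn z) (hfle z) 2)
      · simp [hfy z (hyq.trans_le (not_lt.1 hz))]
    refine (this.trans_lt (ENNReal.mul_lt_top ENNReal.ofReal_lt_top ?_)).ne
    rw [muM_Iio_eq]
    exact muM_Ioo_lt_top hyp (hy0.trans hyq).le hq.le
  have hν : nuM a b D (Ioc s t) ≤ ENNReal.ofReal (f x) := by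
    rw [nuM_Ioc_eq hs0.le ht, hF]
    refine le_trans ?_ (lintegral_mono_set (Ioc_subset_Ioc hxs.le hty.le))
    refine setLIntegral_mono' measurableSet_Ioc fun u hu => ?_
    simp [hg, hφst u hu]
  have hmain : lam0 a b D * (muM a b D (Ioo 0 x) * ENNReal.ofReal (f x)) * ENNReal.ofReal (f x)
      ≤ 1 * ENNReal.ofReal (f x) := by
    calc _ = lam0 a b D * (muM a b D (Ioo 0 x) * ENNReal.ofReal (f x) ^ 2) := by ring
      _ ≤ lam0 a b D * muL2 a b D f := by gcongr
      _ ≤ Dform a b D f := lam0_mul_le hf hy0.le hy hfy hfin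
      _ ≤ _ := by rwa [one_mul]
  refine le_trans (by gcongr) (?_ :
    lam0 a b D * (muM a b D (Ioo 0 x) * ENNReal.ofReal (f x)) ≤ 1)
  -- If `f x = 0` the product is `0`, even when `λ₀ = ∞`.
  rcases eq_or_ne (ENNReal.ofReal (f x)) 0 with h0 | h0
  · simp [h0]
  · exact (ENNReal.mul_le_mul_iff_left h0 ENNReal.ofReal_ne_top).1 hmain

/-- Exhausting `(x, D)` by the intervals `(x + 1 / (n + 1), t_n]` with `t_n ↑ D`. -/
lemma lam0_mul_muM_mul_nuM_le {a b : ℝ → ℝ} {D : ℝ≥0∞} (hD : 0 < D) (hyp : Hyp a b D) {x : ℝ}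
    (hx : 0 < x) : lam0 a b D * (muM a b D (Ioo 0 x) * nuM a b D (Ioi x)) ≤ 1 := by
  obtain ⟨u, hu, huD, hlim⟩ := exists_seq_strictMono_tendsto' hD
  have hune : ∀ n, u n ≠ ∞ := fun n => (huD n).2.ne_top
  set S : ℕ → Set ℝ := fun n => Ioc (x + 1 / (n + 1)) (u n).toReal with hS
  have hmono : Monotone S := by
    intro m n hmn
    refine Ioc_subset_Ioc ?_ (ENNReal.toReal_mono (hune n) (hu.monotone hmn))
    gcongr
  have hun : nuM a b D (Ioi x) = nuM a b D (⋃ n, S n) := by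
    rw [nuM_apply measurableSet_Ioi, nuM_apply (MeasurableSet.iUnion fun n => measurableSet_Ioc)]
    congr 2
    ext z
    refine and_congr_left fun hz => ?_
    simp only [mem_Ioi, mem_iUnion, mem_Ioc]
    constructor
    · intro hxz
      obtain ⟨n, hn⟩ := exists_nat_one_div_lt (sub_pos.2 hxz)
      obtain ⟨m, hm⟩ := (hlim.eventually (lt_mem_nhds hz.2)).exists
      refine ⟨max n m, ?_, ?_⟩
      · have : (1 : ℝ) / ((max n m : ℕ) + 1) ≤ 1 / (n + 1) := by
          gcongr
          exact le_max_left _ _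
        linarith
      · refine (ENNReal.ofReal_le_iff_le_toReal (hune _)).1 (hm.le.trans ?_)
        exact hu.monotone (le_max_right _ _)
    · rintro ⟨n, hn, -⟩
      have : (0 : ℝ) < 1 / (n + 1) := by positivity
      linarith
  rw [hun, hmono.measure_iUnion, ENNReal.mul_iSup, ENNReal.mul_iSup]
  refine iSup_le fun n => lam0_mul_muM_mul_nuM_Ioc_le hyp hx ?_ ?_
  · have : (0 : ℝ) < 1 / (n + 1) := by positivity
    linarith
  · rw [ENNReal.ofReal_toReal (hune n)]
    exact (huD n).2

lemma lam0_le_inv_deltaND {a b : ℝ → ℝ} {D : ℝ≥0∞} (hD : 0 < D) (hyp : Hyp a b D) :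
    lam0 a b D ≤ (deltaND a b D)⁻¹ := by
  rw [ENNReal.le_inv_iff_mul_le, deltaND]
  simp only [ENNReal.mul_iSup]
  exact iSup₂_le fun x hx => lam0_mul_muM_mul_nuM_le hD hyp hx.1

lemma inv_four_mul_deltaND_le_lam0 {a b : ℝ → ℝ} {D : ℝ≥0∞} (hyp : Hyp a b D) :
    (4 * deltaND a b D)⁻¹ ≤ lam0 a b D := by
  refine le_sInf ?_
  rintro r ⟨f, hf, ⟨p, hp0, hp, hfp⟩, -, h1, rfl⟩
  have h := muL2_le hyp hf hp0 hp hfp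
  rw [h1] at h
  refine (ENNReal.inv_le_iff_le_mul (fun _ h0 => ?_) fun _ h0 => ?_).2 h <;>
    simp [h0] at h

/-! ### The case of an infinite interval -/

lemma deltaND_eq_top {a b : ℝ → ℝ} (hyp : Hyp a b ∞) (hν : nuM a b ∞ univ = ∞) :
    deltaND a b ∞ = ∞ := by
  have h1 : ENNReal.ofReal 1 < (∞ : ℝ≥0∞) := ENNReal.ofReal_lt_top
  have hlow : nuM a b ∞ (Iic 1) < ∞ := by
    rw [nuM_apply measurableSet_Iic]
    refine (lintegral_mono_set fun z hz => ⟨hz.2.1.le, hz.1⟩ : _ ≤ ∫⁻ z in Icc 0 1,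
      ENNReal.ofReal (Real.exp (-Cf a b z))).trans_lt ?_
    exact (continuousOn_Cf_Icc hyp zero_le_one le_top).neg.rexp.integrableOn_Icc.setLIntegral_lt_top
  have hhigh : nuM a b ∞ (Ioi 1) = ∞ := by
    have h2 : (Iic (1 : ℝ)) ∪ Ioi 1 = univ := Iic_union_Ioi
    have h3 := measure_union_le (μ := nuM a b ∞) (Iic (1 : ℝ)) (Ioi 1)
    rw [h2, hν, top_le_iff, ENNReal.add_eq_top] at h3
    exact h3.resolve_left hlow.ne
  rw [← top_le_iff]
  refine le_trans ?_ (le_iSup₂_of_le (f := fun x _ => muM a b ∞ (Ioo 0 x) * nuM a b ∞ (Ioi x))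
    1 ⟨one_pos, h1⟩ le_rfl)
  rw [hhigh, ENNReal.mul_top (muM_Ioo_ne_zero hyp one_pos h1)]

lemma deltaND_le_lintegral {a b : ℝ → ℝ} {D : ℝ≥0∞} :
    deltaND a b D ≤ ∫⁻ x, muM a b D (Ioo 0 x) ∂(nuM a b D) := by
  refine iSup₂_le fun x _ => ?_
  rw [← setLIntegral_const]
  exact (setLIntegral_mono' measurableSet_Ioi fun u hu =>
    measure_mono (Ioo_subset_Ioo_right (le_of_lt hu))).trans (setLIntegral_le_lintegral _ _)

/-- Theorem 2.4: criterion and basic estimates for the ND principal eigenvalue: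
`λ₀ > 0` iff `δ < ∞`, with `(4δ)⁻¹ ≤ λ₀ ≤ δ⁻¹`; in particular for `D = ∞`,
`λ₀ = 0` when `ν(0,D) = ∞` and `λ₀ > 0` when `∫_0^∞ μ(0,x) ν(dx) < ∞`. -/
theorem nd_criterion_basic_estimates
    (a b : ℝ → ℝ) (D : ℝ≥0∞) (hD : 0 < D) (hyp : Hyp a b D) :
    (0 < lam0 a b D ↔ deltaND a b D < ∞) ∧
    (4 * deltaND a b D)⁻¹ ≤ lam0 a b D ∧ lam0 a b D ≤ (deltaND a b D)⁻¹ ∧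
    (D = ∞ → nuM a b D Set.univ = ∞ → lam0 a b D = 0) ∧
    (D = ∞ → (∫⁻ x, muM a b D (Set.Ioo 0 x) ∂(nuM a b D)) < ∞ → 0 < lam0 a b D) := by
  have hupper := lam0_le_inv_deltaND hD hyp
  have hlower := inv_four_mul_deltaND_le_lam0 hyp
  have hpos : deltaND a b D < ∞ → 0 < lam0 a b D := fun h =>
    (ENNReal.inv_pos.2 (ENNReal.mul_ne_top (by norm_num) h.ne)).trans_le hlower
  refine ⟨⟨fun h => ?_, hpos⟩, hlower, hupper, ?_, ?_⟩
  · exact lt_top_iff_ne_top.2 (ENNReal.inv_pos.1 (h.trans_le hupper))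
  · rintro rfl hν
    simpa [deltaND_eq_top hyp hν] using hupper
  · exact fun _ h => hpos (deltaND_le_lintegral.trans_lt h)
end
end

section
/- Under hypothesis (1.0), assume δ = sup_{x∈(0,D)} μ(0,x)·ν(x,D) < ∞ and set φ(x) = ν(x,D). Define f₁ = √φ, fₙ = f_{n−1}·II(f_{n−1}) for n ≥ 2, and δₙ = sup_{x∈(0,D)} II(fₙ)(x). Then the sequence (δₙ) is decreasing in n, and λ₀ ≥ δₙ^{-1} ≥ (4δ)^{-1} for every n ≥ 1. -/
/-!
Write `K f(x) = ∫_x^D ν(ds) ∫_0^s f dμ`, so that `II(f) = K f / f` and `fₙ₊₁ = K fₙ`. Everything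
follows from the linearity and monotonicity of `K` on nonnegative functions, and all the integrals
are treated as lower Lebesgue integrals with values in `[0, ∞]`.

* Initial step: `K √φ ≤ 4δ √φ` (`opK_sqrt_phiR_le`). Integration by parts and `μ(0,t) ≤ δ/φ(t)`
  give `∫_0^s √φ dμ ≤ 2δ φ(s)^{-1/2}`, and `∫_x^D φ^{-1/2} dν ≤ 2 √φ(x)` because `dφ = -dν`.
* Monotonicity: applying `K` to `K fₙ ≤ δₙ fₙ` yields `K fₙ₊₁ ≤ δₙ fₙ₊₁`, that is `δₙ₊₁ ≤ δₙ`
  (`delSeqND_succ_le`). Together with the initial step, `δₙ ≤ 4δ` for all `n`.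
* Eigenvalue bound: if `f > 0` and `K f ≤ c f`, then `μ(h²) ≤ c D(h)` for every admissible `h`
  (`muL2_le_mul_Dform`). With `F(s) = ∫_0^s f dμ`, the Cauchy–Schwarz inequality gives
  `h(x)² = (∫_x^D h')² ≤ K f(x) · ∫_x^D e^C h'² / F ds`. Integrating against `μ` and using Tonelli,
  `μ(h²) ≤ ∫ (e^C h'² / F)(s) (∫_0^s K f dμ) ds ≤ c D(h)`, since `∫_0^s K f dμ ≤ c F(s)`.
-/

open MeasureTheory Set Filter Topology ENNReal

noncomputable section

/-- `φ(x) = ν(x,D)` (as a real number). -/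
def phiR (a b : ℝ → ℝ) (D : ℝ≥0∞) (x : ℝ) : ℝ := (nuM a b D (Set.Ioi x)).toReal

/-- For positive `f ∈ C[0,D]`, `II(f)(x) = (1/f(x)) ∫_x^D ν(ds) ∫_0^s f dμ`. -/
def opIIpos (a b : ℝ → ℝ) (D : ℝ≥0∞) (f : ℝ → ℝ) (x : ℝ) : ℝ≥0∞ :=
  (∫⁻ s in Set.Ioi x,
      (∫⁻ u in Set.Ioo 0 s, ENNReal.ofReal (f u) ∂(muM a b D)) ∂(nuM a b D)) /
    ENNReal.ofReal (f x)

/-- The approximating sequence `f₁ = √φ`, `fₙ = f_{n-1} · II(f_{n-1})`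
(indexed so that `fseqND n` is `f_{n+1}`). -/
def fseqND (a b : ℝ → ℝ) (D : ℝ≥0∞) : ℕ → ℝ → ℝ
  | 0 => fun x => Real.sqrt (phiR a b D x)
  | n + 1 => fun x =>
      fseqND a b D n x * (opIIpos a b D (fseqND a b D n) x).toReal

/-- `δₙ = sup_{x ∈ (0,D)} II(fₙ)(x)` (indexed so that `delSeqND n` is `δ_{n+1}`). -/
def delSeqND (a b : ℝ → ℝ) (D : ℝ≥0∞) (n : ℕ) : ℝ≥0∞ :=
  ⨆ x ∈ ooI D, opIIpos a b D (fseqND a b D n) x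

lemma ooI_mono {D : ℝ≥0∞} {x y : ℝ} (hy : y ∈ ooI D) (hx : 0 < x) (hxy : x ≤ y) : x ∈ ooI D :=
  ⟨hx, (ENNReal.ofReal_le_ofReal hxy).trans_lt hy.2⟩

lemma exists_gt_mem_ooI {D : ℝ≥0∞} {x : ℝ} (hx0 : 0 ≤ x) (hx : ENNReal.ofReal x < D) :
    ∃ y ∈ ooI D, x < y := by
  obtain ⟨r, hr1, hr2⟩ := ENNReal.lt_iff_exists_nnreal_btwn.1 hx
  have hxr : x < r := by
    rw [← ENNReal.ofReal_coe_nnreal] at hr1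
    exact (ENNReal.ofReal_lt_ofReal_iff_of_nonneg hx0).1 hr1
  refine ⟨r, ⟨hx0.trans_lt hxr, by rwa [ENNReal.ofReal_coe_nnreal]⟩, hxr⟩

/-- No integrability is needed here: the parametric integral is measurable even where its value
is the default `0`. -/
lemma measurable_Cf {a b : ℝ → ℝ} (ha : Measurable a) (hb : Measurable b) :
    Measurable (Cf a b) := by
  have h1 : Cf a b = fun x => ∫ u, ({p : ℝ × ℝ | 0 < p.2 ∧ p.2 < p.1}).indicator
      (fun p => b p.2 / a p.2) (x, u) := by
    funext x
    rw [Cf, ← integral_indicator measurableSet_Ioo]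
    rfl
  rw [h1]
  have hm : MeasurableSet {p : ℝ × ℝ | 0 < p.2 ∧ p.2 < p.1} :=
    (measurableSet_lt measurable_const measurable_snd).inter
      (measurableSet_lt measurable_snd measurable_fst)
  have h2 : Measurable (({p : ℝ × ℝ | 0 < p.2 ∧ p.2 < p.1}).indicator
      (fun p => b p.2 / a p.2)) :=
    ((hb.comp measurable_snd).div (ha.comp measurable_snd)).indicator hm
  exact (h2.stronglyMeasurable.integral_prod_right' (ν := volume)).measurable

lemma ae_mem_ooI_muM (a b : ℝ → ℝ) (D : ℝ≥0∞) : ∀ᵐ x ∂(muM a b D), x ∈ ooI D :=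
  (withDensity_absolutelyContinuous _ _).ae_le (ae_restrict_mem (isOpen_ooI D).measurableSet)

lemma ae_mem_ooI_nuM (a b : ℝ → ℝ) (D : ℝ≥0∞) : ∀ᵐ x ∂(nuM a b D), x ∈ ooI D :=
  (withDensity_absolutelyContinuous _ _).ae_le (ae_restrict_mem (isOpen_ooI D).measurableSet)

instance (a b : ℝ → ℝ) (D : ℝ≥0∞) : SFinite (muM a b D) := by unfold muM; infer_instance

instance (a b : ℝ → ℝ) (D : ℝ≥0∞) : SFinite (nuM a b D) := by unfold nuM; infer_instance

lemma measurable_phiR (a b : ℝ → ℝ) (D : ℝ≥0∞) : Measurable (phiR a b D) :=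
  (Antitone.measurable fun _ _ hst =>
      measure_mono (Set.Ioi_subset_Ioi hst) : Measurable fun x =>
        nuM a b D (Set.Ioi x)).ennreal_toReal

lemma setLIntegral_nuM {a b : ℝ → ℝ} {D : ℝ≥0∞} (hyp : Hyp a b D) {g : ℝ → ℝ≥0∞}
    (hg : Measurable g) {s : Set ℝ} (hs : MeasurableSet s) :
    ∫⁻ x in s, g x ∂(nuM a b D) =
      ∫⁻ x in s ∩ ooI D, ENNReal.ofReal (Real.exp (-Cf a b x)) * g x := by
  have hm := measurable_Cf hyp.1 hyp.2.1
  rw [nuM, setLIntegral_withDensity_eq_setLIntegral_mul _ (by fun_prop) hg hs,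
    Measure.restrict_restrict hs]
  rfl

lemma lintegral_pos_of_Ioo {α : Measure ℝ} {g : ℝ → ℝ≥0∞} (hg : Measurable g) {s : Set ℝ}
    {x y : ℝ} (hs : Set.Ioo x y ⊆ s) (hpos : ∀ t ∈ Set.Ioo x y, g t ≠ 0)
    (hα : 0 < α (Set.Ioo x y)) : 0 < ∫⁻ t in s, g t ∂α := by
  refine lt_of_lt_of_le ?_ (lintegral_mono_set hs)
  rw [setLIntegral_pos_iff hg]
  rwa [Set.inter_eq_right.2 (show Set.Ioo x y ⊆ Function.support g from hpos)]

lemma nuM_Ioo_pos {a b : ℝ → ℝ} {D : ℝ≥0∞} (hyp : Hyp a b D) {x y : ℝ} (hx : 0 ≤ x)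
    (hy : y ∈ ooI D) (hxy : x < y) : 0 < nuM a b D (Set.Ioo x y) := by
  have hm := measurable_Cf hyp.1 hyp.2.1
  have hsub : Set.Ioo x y ⊆ ooI D := fun t ht => ooI_mono hy (hx.trans_lt ht.1) ht.2.le
  rw [nuM, withDensity_apply _ measurableSet_Ioo, Measure.restrict_restrict measurableSet_Ioo]
  refine lintegral_pos_of_Ioo (by fun_prop) (Set.subset_inter subset_rfl hsub)
    (fun t _ => ?_) (by simpa using hxy)
  simpa using Real.exp_pos _

lemma muM_Ioo_pos {a b : ℝ → ℝ} {D : ℝ≥0∞} (hyp : Hyp a b D) {x y : ℝ} (hx : 0 ≤ x)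
    (hy : y ∈ ooI D) (hxy : x < y) : 0 < muM a b D (Set.Ioo x y) := by
  have hm := measurable_Cf hyp.1 hyp.2.1
  have ha := hyp.1
  have hsub : Set.Ioo x y ⊆ ooI D := fun t ht => ooI_mono hy (hx.trans_lt ht.1) ht.2.le
  rw [muM, withDensity_apply _ measurableSet_Ioo, Measure.restrict_restrict measurableSet_Ioo]
  refine lintegral_pos_of_Ioo (by fun_prop) (Set.subset_inter subset_rfl hsub)
    (fun t ht => ?_) (by simpa using hxy)
  have := hyp.2.2.1 t (hsub ht)
  simp only [ne_eq, ENNReal.ofReal_eq_zero, not_le]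
  positivity

lemma nuM_Ioi_pos {a b : ℝ → ℝ} {D : ℝ≥0∞} (hyp : Hyp a b D) {x : ℝ} (hx : x ∈ ooI D) :
    0 < nuM a b D (Set.Ioi x) := by
  obtain ⟨y, hy, hxy⟩ := exists_gt_mem_ooI hx.1.le hx.2
  exact (nuM_Ioo_pos hyp hx.1.le hy hxy).trans_le (measure_mono fun t ht => ht.1)

lemma muM_mul_nuM_le (a b : ℝ → ℝ) {D : ℝ≥0∞} {x : ℝ} (hx : x ∈ ooI D) :
    muM a b D (Set.Ioo 0 x) * nuM a b D (Set.Ioi x) ≤ deltaND a b D :=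
  le_iSup₂ (f := fun x (_ : x ∈ ooI D) =>
    muM a b D (Set.Ioo 0 x) * nuM a b D (Set.Ioi x)) x hx

lemma nuM_Ioi_ne_top {a b : ℝ → ℝ} {D : ℝ≥0∞} (hyp : Hyp a b D) (hδ : deltaND a b D < ∞)
    {x : ℝ} (hx : x ∈ ooI D) : nuM a b D (Set.Ioi x) ≠ ∞ := by
  intro h
  have h1 := muM_mul_nuM_le a b hx
  rw [h, ENNReal.mul_top (muM_Ioo_pos hyp le_rfl hx hx.1).ne'] at h1
  exact absurd h1 (not_le.2 hδ)

lemma phiR_pos {a b : ℝ → ℝ} {D : ℝ≥0∞} (hyp : Hyp a b D) (hδ : deltaND a b D < ∞)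
    {x : ℝ} (hx : x ∈ ooI D) : 0 < phiR a b D x :=
  ENNReal.toReal_pos (nuM_Ioi_pos hyp hx).ne' (nuM_Ioi_ne_top hyp hδ hx)

lemma ofReal_phiR {a b : ℝ → ℝ} {D : ℝ≥0∞} (hyp : Hyp a b D) (hδ : deltaND a b D < ∞)
    {x : ℝ} (hx : x ∈ ooI D) : ENNReal.ofReal (phiR a b D x) = nuM a b D (Set.Ioi x) :=
  ENNReal.ofReal_toReal (nuM_Ioi_ne_top hyp hδ hx)

lemma phiR_sub {a b : ℝ → ℝ} {D : ℝ≥0∞} (hyp : Hyp a b D) (hδ : deltaND a b D < ∞)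
    {x y : ℝ} (hx : x ∈ ooI D) (hy : y ∈ ooI D) (hxy : x ≤ y) :
    phiR a b D x = phiR a b D y + ∫ t in x..y, Real.exp (-Cf a b t) := by
  have hsub : Set.Ioc x y ⊆ ooI D := fun t ht => ooI_mono hy (hx.1.trans ht.1) ht.2
  have h1 : nuM a b D (Set.Ioi x) = nuM a b D (Set.Ioc x y) + nuM a b D (Set.Ioi y) := by
    rw [← Set.Ioc_union_Ioi_eq_Ioi hxy, measure_union _ measurableSet_Ioi]
    exact Set.disjoint_left.2 fun t ht ht' => not_lt.2 ht.2 ht'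
  have h2 : (nuM a b D (Set.Ioc x y)).toReal = ∫ t in x..y, Real.exp (-Cf a b t) := by
    rw [nuM, withDensity_apply _ measurableSet_Ioc, Measure.restrict_restrict measurableSet_Ioc,
      Set.inter_eq_left.2 hsub, intervalIntegral.integral_of_le hxy,
      integral_eq_lintegral_of_nonneg_ae (Eventually.of_forall fun t => (Real.exp_pos _).le)]
    have hm := measurable_Cf hyp.1 hyp.2.1
    exact (by fun_prop : Measurable fun t => Real.exp (-Cf a b t)).aestronglyMeasurable
  have hfin : nuM a b D (Set.Ioc x y) ≠ ∞ :=
    ne_top_of_le_ne_top (nuM_Ioi_ne_top hyp hδ hx) (measure_mono fun t ht => ht.1)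
  rw [phiR, phiR, h1, ENNReal.toReal_add hfin (nuM_Ioi_ne_top hyp hδ hy), h2, add_comm]

lemma hasDerivAt_phiR {a b : ℝ → ℝ} {D : ℝ≥0∞} (hyp : Hyp a b D) (hδ : deltaND a b D < ∞)
    {x : ℝ} (hx : x ∈ ooI D) :
    HasDerivAt (phiR a b D) (-Real.exp (-Cf a b x)) x := by
  obtain ⟨q, hq, hxq⟩ := exists_gt_mem_ooI hx.1.le hx.2
  have hcont := continuousOn_exp_neg_Cf hyp
  have hI : IntervalIntegrable (fun t => Real.exp (-Cf a b t)) volume x q := by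
    refine (hcont.mono fun t ht => ?_).intervalIntegrable
    rw [Set.uIcc_of_le hxq.le] at ht
    exact ooI_mono hq (hx.1.trans_le ht.1) ht.2
  have hd := intervalIntegral.integral_hasDerivAt_left hI
    (hcont.stronglyMeasurableAtFilter (isOpen_ooI D) x hx)
    (hcont.continuousAt ((isOpen_ooI D).mem_nhds hx))
  refine (hd.const_add (phiR a b D q)).congr_of_eventuallyEq ?_
  filter_upwards [Ioo_mem_nhds hx.1 hxq] with y hy
  exact phiR_sub hyp hδ (ooI_mono hq hy.1 hy.2.le) hq hy.2.le

/-- Change of variables `y = φ(t)`, `dy = -ν(dt)`. -/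
lemma lintegral_comp_phiR {a b : ℝ → ℝ} {D : ℝ≥0∞} (hyp : Hyp a b D)
    (hδ : deltaND a b D < ∞) {ψ ρ : ℝ → ℝ} (hψ : ∀ y, 0 < y → HasDerivAt ψ (ρ y) y)
    (hρc : ContinuousOn ρ (Set.Ioi 0)) (hρm : Measurable ρ) (hρ : ∀ y, 0 < y → 0 ≤ ρ y)
    {x y : ℝ} (hx : x ∈ ooI D) (hy : y ∈ ooI D) (hxy : x ≤ y) :
    ∫⁻ t in Set.Ioo x y, ENNReal.ofReal (ρ (phiR a b D t)) ∂(nuM a b D) =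
      ENNReal.ofReal (ψ (phiR a b D x) - ψ (phiR a b D y)) := by
  have hsub : Set.Icc x y ⊆ ooI D := fun t ht => ooI_mono hy (hx.1.trans_le ht.1) ht.2
  have hsub' : Set.Ioo x y ⊆ ooI D := Set.Ioo_subset_Icc_self.trans hsub
  have hφm : Measurable (phiR a b D) := measurable_phiR a b D
  have hφc : ContinuousOn (phiR a b D) (ooI D) := fun t ht =>
    (hasDerivAt_phiR hyp hδ ht).continuousAt.continuousWithinAt
  have hc : ContinuousOn (fun t => Real.exp (-Cf a b t) * ρ (phiR a b D t)) (Set.Icc x y) :=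
    ((continuousOn_exp_neg_Cf hyp).mul
      (hρc.comp hφc fun t ht => phiR_pos hyp hδ ht)).mono hsub
  have hi : IntervalIntegrable (fun t => Real.exp (-Cf a b t) * ρ (phiR a b D t)) volume x y :=
    ContinuousOn.intervalIntegrable (by rwa [Set.uIcc_of_le hxy])
  have hF : ∫ t in x..y, Real.exp (-Cf a b t) * ρ (phiR a b D t) =
      ψ (phiR a b D x) - ψ (phiR a b D y) := by
    have := intervalIntegral.integral_eq_sub_of_hasDerivAt
      (f := fun t => - ψ (phiR a b D t)) (a := x) (b := y)
      (f' := fun t => Real.exp (-Cf a b t) * ρ (phiR a b D t)) (fun t ht => ?_) hi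
    · rw [this]; ring
    · rw [Set.uIcc_of_le hxy] at ht
      have := ((hψ _ (phiR_pos hyp hδ (hsub ht))).comp t
        (hasDerivAt_phiR hyp hδ (hsub ht))).neg
      rw [mul_neg, neg_neg, mul_comm] at this
      exact this
  rw [setLIntegral_nuM hyp (by fun_prop) measurableSet_Ioo, Set.inter_eq_left.2 hsub',
    ← hF, intervalIntegral.integral_of_le hxy, integral_Ioc_eq_integral_Ioo,
    ofReal_integral_eq_lintegral_ofReal]
  · refine lintegral_congr fun t => ?_
    rw [ENNReal.ofReal_mul (Real.exp_pos _).le]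
  · exact (hc.integrableOn_Icc).mono_set Set.Ioo_subset_Icc_self
  · filter_upwards [ae_restrict_mem measurableSet_Ioo] with t ht
    exact mul_nonneg (Real.exp_pos _).le (hρ _ (phiR_pos hyp hδ (hsub' ht)))

/-! ### Exhaustion and Tonelli over the triangle -/

lemma lintegral_iUnion_le {ι : Type*} [Countable ι] {α : Measure ℝ} {k : ℝ → ℝ≥0∞}
    {S : ι → Set ℝ} (hS : ∀ i, MeasurableSet (S i)) (hd : Directed (· ⊆ ·) S) {B : ℝ≥0∞}
    (h : ∀ i, ∫⁻ t in S i, k t ∂α ≤ B) : ∫⁻ t in ⋃ i, S i, k t ∂α ≤ B := by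
  rw [← withDensity_apply _ (MeasurableSet.iUnion hS), hd.measure_iUnion]
  refine iSup_le fun i => ?_
  rw [withDensity_apply _ (hS i)]
  exact h i

/-- Restricting to `u > 0` avoids any discussion of the behaviour of `φ` at the endpoint `0`. -/
lemma lintegral_Ioo_zero_le {α : Measure ℝ} {k : ℝ → ℝ≥0∞} {s : ℝ} {B : ℝ≥0∞}
    (h : ∀ u ∈ Set.Ioo 0 s, ∫⁻ t in Set.Ioo u s, k t ∂α ≤ B) :
    ∫⁻ t in Set.Ioo 0 s, k t ∂α ≤ B := by
  have hU : Set.Ioo 0 s = ⋃ q : {q : ℚ // (q : ℝ) ∈ Set.Ioo 0 s}, Set.Ioo ((q : ℚ) : ℝ) s := by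
    ext t
    simp only [Set.mem_iUnion]
    constructor
    · intro ht
      obtain ⟨q, hq1, hq2⟩ := exists_rat_btwn ht.1
      exact ⟨⟨q, hq1, hq2.trans ht.2⟩, hq2, ht.2⟩
    · rintro ⟨⟨q, hq⟩, ht⟩
      exact ⟨hq.1.trans ht.1, ht.2⟩
  rw [hU]
  refine lintegral_iUnion_le (fun _ => measurableSet_Ioo) ?_ fun q => h _ q.2
  have hm : Antitone fun q : {q : ℚ // (q : ℝ) ∈ Set.Ioo 0 s} => Set.Ioo ((q : ℚ) : ℝ) s := by
    intro p q hpq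
    exact Set.Ioo_subset_Ioo_left (by exact_mod_cast hpq)
  intro p q
  rcases le_total p q with hpq | hpq
  · exact ⟨p, subset_rfl, hm hpq⟩
  · exact ⟨q, hm hpq, subset_rfl⟩

/-- The analogous exhaustion at the right endpoint, uniform in whether `D` is finite. -/
lemma lintegral_Ioi_nuM_le {a b : ℝ → ℝ} {D : ℝ≥0∞} {k : ℝ → ℝ≥0∞} {x : ℝ} (hx : 0 < x)
    {B : ℝ≥0∞}
    (h : ∀ y ∈ ooI D, x ≤ y → ∫⁻ t in Set.Ioo x y, k t ∂(nuM a b D) ≤ B) :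
    ∫⁻ t in Set.Ioi x, k t ∂(nuM a b D) ≤ B := by
  have hU : Set.Ioi x ∩ ooI D =
      ⋃ q : {q : ℚ // (q : ℝ) ∈ ooI D ∧ x ≤ q}, Set.Ioo x ((q : ℚ) : ℝ) := by
    ext t
    simp only [Set.mem_iUnion]
    constructor
    · rintro ⟨hxt, ht⟩
      obtain ⟨y, hy, hty⟩ := exists_gt_mem_ooI ht.1.le ht.2
      obtain ⟨q, hq1, hq2⟩ := exists_rat_btwn hty
      exact ⟨⟨q, ooI_mono hy (ht.1.trans hq1) hq2.le, (hxt.trans hq1).le⟩, hxt, hq1⟩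
    · rintro ⟨⟨q, hq⟩, ht⟩
      exact ⟨ht.1, ooI_mono hq.1 (hx.trans ht.1) ht.2.le⟩
  have hae : (Set.Ioi x : Set ℝ) =ᵐ[nuM a b D] (Set.Ioi x ∩ ooI D : Set ℝ) := by
    filter_upwards [ae_mem_ooI_nuM a b D] with t ht
    exact propext ⟨fun h => ⟨h, ht⟩, fun h => h.1⟩
  rw [setLIntegral_congr hae, hU]
  refine lintegral_iUnion_le (fun _ => measurableSet_Ioo) ?_ fun q => h _ q.2.1 q.2.2
  have hm : Monotone fun q : {q : ℚ // (q : ℝ) ∈ ooI D ∧ x ≤ q} =>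
      Set.Ioo x ((q : ℚ) : ℝ) := by
    intro p q hpq
    exact Set.Ioo_subset_Ioo_right (by exact_mod_cast hpq)
  intro p q
  rcases le_total p q with hpq | hpq
  · exact ⟨q, hm hpq, subset_rfl⟩
  · exact ⟨p, subset_rfl, hm hpq⟩

/-- Tonelli's theorem over the triangle `u < t`. -/
lemma lintegral_triangle {α β : Measure ℝ} [SFinite α] [SFinite β] {g k : ℝ → ℝ≥0∞}
    (hg : Measurable g) (hk : Measurable k) :
    ∫⁻ u, g u * ∫⁻ t in Set.Ioi u, k t ∂β ∂α =
      ∫⁻ t, k t * ∫⁻ u in Set.Iio t, g u ∂α ∂β := by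
  have hm : MeasurableSet {p : ℝ × ℝ | p.1 < p.2} :=
    measurableSet_lt measurable_fst measurable_snd
  have hF : Measurable ({p : ℝ × ℝ | p.1 < p.2}.indicator fun p => g p.1 * k p.2) :=
    ((hg.comp measurable_fst).mul (hk.comp measurable_snd)).indicator hm
  have h1 : ∀ u, g u * ∫⁻ t in Set.Ioi u, k t ∂β =
      ∫⁻ t, {p : ℝ × ℝ | p.1 < p.2}.indicator (fun p => g p.1 * k p.2) (u, t) ∂β := by
    intro u
    rw [← lintegral_const_mul _ hk, ← lintegral_indicator measurableSet_Ioi]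
    rfl
  have h2 : ∀ t, k t * ∫⁻ u in Set.Iio t, g u ∂α =
      ∫⁻ u, {p : ℝ × ℝ | p.1 < p.2}.indicator (fun p => g p.1 * k p.2) (u, t) ∂α := by
    intro t
    rw [← lintegral_const_mul _ hg, ← lintegral_indicator measurableSet_Iio]
    refine lintegral_congr fun u => ?_
    simp only [Set.indicator, Set.mem_Iio, Set.mem_ofPred_eq, mul_comm]
  simp_rw [h1, h2]
  exact lintegral_lintegral_swap hF.aemeasurable

/-! ### The operator `f ↦ f · II(f)` -/

/-- The numerator of `II(f)`: the operator `K f(x) = ∫_x^D ν(ds) ∫_0^s f dμ`, which inverts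
the (negative) generator. -/
def opK (a b : ℝ → ℝ) (D : ℝ≥0∞) (g : ℝ → ℝ≥0∞) (x : ℝ) : ℝ≥0∞ :=
  ∫⁻ s in Set.Ioi x, (∫⁻ u in Set.Ioo 0 s, g u ∂(muM a b D)) ∂(nuM a b D)

lemma measurable_primitive (α : Measure ℝ) (g : ℝ → ℝ≥0∞) :
    Measurable fun s => ∫⁻ u in Set.Ioo 0 s, g u ∂α :=
  Monotone.measurable fun _ _ hst => lintegral_mono_set (Set.Ioo_subset_Ioo_right hst)

lemma measurable_opK (a b : ℝ → ℝ) (D : ℝ≥0∞) (g : ℝ → ℝ≥0∞) : Measurable (opK a b D g) :=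
  Antitone.measurable fun _ _ hst => lintegral_mono_set (Set.Ioi_subset_Ioi hst)

/-- Values of `g` outside `(0, D)` are irrelevant. -/
lemma opK_mono {a b : ℝ → ℝ} {D : ℝ≥0∞} {g k : ℝ → ℝ≥0∞} (h : ∀ x ∈ ooI D, g x ≤ k x) (x : ℝ) :
    opK a b D g x ≤ opK a b D k x := by
  refine lintegral_mono fun s => lintegral_mono_ae (ae_restrict_of_ae ?_)
  filter_upwards [ae_mem_ooI_muM a b D] with t ht using h t ht

lemma opK_const_mul {a b : ℝ → ℝ} {D : ℝ≥0∞} {g : ℝ → ℝ≥0∞} (hg : Measurable g) (c : ℝ≥0∞)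
    (x : ℝ) : opK a b D (fun t => c * g t) x = c * opK a b D g x := by
  simp_rw [opK, lintegral_const_mul c hg]
  rw [lintegral_const_mul c (measurable_primitive _ _)]

/-! ### The Hardy-type bound for the first iterate -/

lemma hasDerivAt_neg_inv_sqrt {y : ℝ} (hy : 0 < y) :
    HasDerivAt (fun y => -(√y)⁻¹) ((2 * √y)⁻¹ * y⁻¹) y := by
  have h := ((Real.hasDerivAt_sqrt hy.ne').inv (Real.sqrt_pos.2 hy).ne').neg
  refine h.congr_deriv ?_
  rw [Real.sq_sqrt hy.le]
  field_simp

/-- Writing `√φ(u) = √φ(s) + ½∫_u^s φ^{-1/2} dν` and applying Tonelli integrates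
`∫_0^s √φ dμ` by parts; the bound `μ(0,t) ≤ δ / φ(t)` then controls both terms. -/
lemma primitive_sqrt_phiR_le {a b : ℝ → ℝ} {D : ℝ≥0∞} (hyp : Hyp a b D)
    (hδ : deltaND a b D < ∞) {s : ℝ} (hs : s ∈ ooI D) :
    ∫⁻ u in Set.Ioo 0 s, ENNReal.ofReal (√(phiR a b D u)) ∂(muM a b D) ≤
      2 * deltaND a b D * ENNReal.ofReal ((√(phiR a b D s))⁻¹) := by
  set φ := phiR a b D with hφ
  have hφm : Measurable φ := measurable_phiR a b D
  set δ := deltaND a b D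
  have hpos : ∀ t ∈ ooI D, 0 < φ t := fun t ht => phiR_pos hyp hδ ht
  have hM : ∀ t ∈ ooI D, muM a b D (Set.Ioo 0 t) ≤ δ * ENNReal.ofReal ((φ t)⁻¹) := by
    intro t ht
    have h := muM_mul_nuM_le a b ht
    rw [ENNReal.ofReal_inv_of_pos (hpos t ht), hφ, ofReal_phiR hyp hδ ht, ← div_eq_mul_inv]
    exact (ENNReal.le_div_iff_mul_le (Or.inl (nuM_Ioi_pos hyp ht).ne')
      (Or.inl (nuM_Ioi_ne_top hyp hδ ht))).2 h
  have hsub : ∀ t ∈ Set.Ioo 0 s, t ∈ ooI D := fun t ht => ooI_mono hs ht.1 ht.2.le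
  have hbase : ∀ u ∈ Set.Ioo 0 s, ENNReal.ofReal (√(φ u)) ≤ ENNReal.ofReal (√(φ s)) +
      1 * ∫⁻ t in Set.Ioi u, ENNReal.ofReal ((2 * √(φ t))⁻¹)
        ∂((nuM a b D).restrict (Set.Iio s)) := by
    intro u hu
    have h := lintegral_comp_phiR hyp hδ (ψ := fun y => √y) (ρ := fun y => (2 * √y)⁻¹)
      (fun y hy => by simpa using Real.hasDerivAt_sqrt hy.ne')
      (ContinuousOn.inv₀ (by fun_prop) fun y hy => by
        have : 0 < √y := Real.sqrt_pos.2 hy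
        positivity) (by fun_prop) (fun y hy => by positivity) (hsub u hu) hs hu.2.le
    rw [one_mul, Measure.restrict_restrict measurableSet_Ioi, Set.Ioi_inter_Iio, h]
    refine le_trans (ENNReal.ofReal_le_ofReal ?_) ENNReal.ofReal_add_le
    simp [hφ]
  calc _ ≤ ∫⁻ u in Set.Ioo 0 s, (ENNReal.ofReal (√(φ s)) +
      1 * ∫⁻ t in Set.Ioi u, ENNReal.ofReal ((2 * √(φ t))⁻¹)
        ∂((nuM a b D).restrict (Set.Iio s))) ∂(muM a b D) :=
        setLIntegral_mono' measurableSet_Ioo hbase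
    _ = ENNReal.ofReal (√(φ s)) * muM a b D (Set.Ioo 0 s) +
        ∫⁻ t in Set.Iio s, ENNReal.ofReal ((2 * √(φ t))⁻¹) *
          ∫⁻ u in Set.Iio t, 1 ∂((muM a b D).restrict (Set.Ioo 0 s)) ∂(nuM a b D) := by
        rw [lintegral_add_left measurable_const, lintegral_triangle measurable_const (by fun_prop)]
        simp
    _ ≤ ENNReal.ofReal (√(φ s)) * (δ * ENNReal.ofReal ((φ s)⁻¹)) +
        ∫⁻ t in Set.Iio s, δ * ENNReal.ofReal ((2 * √(φ t))⁻¹ * (φ t)⁻¹) ∂(nuM a b D) := by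
        refine add_le_add (mul_le_mul_right (hM s hs) _)
          (lintegral_mono_ae (ae_restrict_of_ae ?_))
        filter_upwards [ae_mem_ooI_nuM a b D] with t ht
        rw [lintegral_one, Measure.restrict_apply_univ,
          Measure.restrict_apply measurableSet_Iio, ENNReal.ofReal_mul (by positivity)]
        refine (mul_le_mul_right ((measure_mono (t := Set.Ioo 0 t) fun v hv => ⟨hv.2.1, hv.1⟩).trans
          (hM t ht)) _).trans_eq ?_
        ring
    _ = δ * ENNReal.ofReal ((√(φ s))⁻¹) +
        δ * ∫⁻ t in Set.Ioo 0 s, ENNReal.ofReal ((2 * √(φ t))⁻¹ * (φ t)⁻¹) ∂(nuM a b D) := by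
        congr 1
        · rw [mul_left_comm, ← ENNReal.ofReal_mul (Real.sqrt_nonneg _)]
          congr 2
          rw [← div_eq_mul_inv, Real.sqrt_div_self', one_div]
        · rw [lintegral_const_mul _ (by fun_prop)]
          congr 1
          refine setLIntegral_congr ?_
          filter_upwards [ae_mem_ooI_nuM a b D] with t ht
          exact propext ⟨fun h => ⟨ht.1, h⟩, fun h => h.2⟩
    _ ≤ δ * ENNReal.ofReal ((√(φ s))⁻¹) + δ * ENNReal.ofReal ((√(φ s))⁻¹) := by
        gcongr
        refine lintegral_Ioo_zero_le fun u hu => ?_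
        have h := lintegral_comp_phiR hyp hδ (ψ := fun y => -(√y)⁻¹)
          (ρ := fun y => (2 * √y)⁻¹ * y⁻¹) (fun y hy => hasDerivAt_neg_inv_sqrt hy)
          (ContinuousOn.mul (ContinuousOn.inv₀ (by fun_prop) fun y hy => by
            have : 0 < √y := Real.sqrt_pos.2 hy
            positivity) (ContinuousOn.inv₀ (by fun_prop) fun y hy => (ne_of_gt hy)))
          (by fun_prop) (fun y hy => by positivity) (hsub u hu) hs hu.2.le
        rw [h]
        refine ENNReal.ofReal_le_ofReal ?_
        have : 0 ≤ (√(φ u))⁻¹ := by positivity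
        simp only [← hφ]
        linarith
    _ = _ := by ring

/-- This is `II(√φ) ≤ 4δ`: one factor `2` comes from `primitive_sqrt_phiR_le`, the other from
`∫_x^D φ^{-1/2} dν ≤ 2√φ(x)`. -/
lemma opK_sqrt_phiR_le {a b : ℝ → ℝ} {D : ℝ≥0∞} (hyp : Hyp a b D)
    (hδ : deltaND a b D < ∞) {x : ℝ} (hx : x ∈ ooI D) :
    opK a b D (fun u => ENNReal.ofReal (√(phiR a b D u))) x ≤
      4 * deltaND a b D * ENNReal.ofReal (√(phiR a b D x)) := by
  set φ := phiR a b D with hφ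
  have hφm : Measurable φ := measurable_phiR a b D
  calc _ ≤ ∫⁻ s in Set.Ioi x, 4 * deltaND a b D * ENNReal.ofReal ((2 * √(φ s))⁻¹)
        ∂(nuM a b D) := by
        refine lintegral_mono_ae (ae_restrict_of_ae ?_)
        filter_upwards [ae_mem_ooI_nuM a b D] with s hs
        refine (primitive_sqrt_phiR_le hyp hδ hs).trans_eq ?_
        have h2 : (√(φ s))⁻¹ = 2 * (2 * √(φ s))⁻¹ := by
          rw [mul_inv, ← mul_assoc]; norm_num
        rw [← hφ, h2, ENNReal.ofReal_mul (by norm_num), ENNReal.ofReal_ofNat]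
        ring
    _ = 4 * deltaND a b D * ∫⁻ s in Set.Ioi x, ENNReal.ofReal ((2 * √(φ s))⁻¹)
        ∂(nuM a b D) := lintegral_const_mul _ (by fun_prop)
    _ ≤ _ := by
        gcongr
        refine lintegral_Ioi_nuM_le hx.1 fun y hy hxy => ?_
        have h := lintegral_comp_phiR hyp hδ (ψ := fun y => √y) (ρ := fun y => (2 * √y)⁻¹)
          (fun y hy => by simpa using Real.hasDerivAt_sqrt hy.ne')
          (ContinuousOn.inv₀ (by fun_prop) fun y hy => by
            have : 0 < √y := Real.sqrt_pos.2 hy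
            positivity) (by fun_prop) (fun y hy => by positivity) hx hy hxy
        rw [h]
        exact ENNReal.ofReal_le_ofReal (by simp [hφ])

/-! ### Monotonicity of the approximating sequence -/

lemma measurable_fseqND (a b : ℝ → ℝ) (D : ℝ≥0∞) (n : ℕ) : Measurable (fseqND a b D n) := by
  induction n with
  | zero => exact (measurable_phiR a b D).sqrt
  | succ n ih =>
    have h : Measurable (opIIpos a b D (fseqND a b D n)) :=
      (measurable_opK a b D fun u => ENNReal.ofReal (fseqND a b D n u)).div ih.ennreal_ofReal
    exact ih.mul h.ennreal_toReal

lemma opK_le_of_delSeq {a b : ℝ → ℝ} {D : ℝ≥0∞} {n : ℕ}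
    {x : ℝ} (hx : x ∈ ooI D) (hpos : 0 < fseqND a b D n x) :
    opK a b D (fun u => ENNReal.ofReal (fseqND a b D n u)) x ≤
      delSeqND a b D n * ENNReal.ofReal (fseqND a b D n x) := by
  have h : opIIpos a b D (fseqND a b D n) x ≤ delSeqND a b D n :=
    le_iSup₂ (f := fun x (_ : x ∈ ooI D) => opIIpos a b D (fseqND a b D n) x) x hx
  exact (ENNReal.div_le_iff (by simpa using hpos) ENNReal.ofReal_ne_top).1 h

lemma delSeq_le_of_opK {a b : ℝ → ℝ} {D : ℝ≥0∞} {n : ℕ} {c : ℝ≥0∞}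
    (hpos : ∀ x ∈ ooI D, 0 < fseqND a b D n x)
    (h : ∀ x ∈ ooI D, opK a b D (fun u => ENNReal.ofReal (fseqND a b D n u)) x ≤
      c * ENNReal.ofReal (fseqND a b D n x)) : delSeqND a b D n ≤ c :=
  iSup₂_le fun x hx =>
    (ENNReal.div_le_iff (by simpa using hpos x hx) ENNReal.ofReal_ne_top).2 (h x hx)

/-- For finite `δₙ` the truncation by `toReal` in the definition of `fₙ₊₁` loses nothing. -/
lemma ofReal_fseqND_succ {a b : ℝ → ℝ} {D : ℝ≥0∞} {n : ℕ} (hfin : delSeqND a b D n < ∞)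
    {x : ℝ} (hx : x ∈ ooI D) (hpos : 0 < fseqND a b D n x) :
    ENNReal.ofReal (fseqND a b D (n + 1) x) =
      opK a b D (fun u => ENNReal.ofReal (fseqND a b D n u)) x := by
  have h : opIIpos a b D (fseqND a b D n) x ≤ delSeqND a b D n :=
    le_iSup₂ (f := fun x (_ : x ∈ ooI D) => opIIpos a b D (fseqND a b D n) x) x hx
  have h2 : fseqND a b D (n + 1) x =
      fseqND a b D n x * (opIIpos a b D (fseqND a b D n) x).toReal := rfl
  rw [h2, ENNReal.ofReal_mul hpos.le, ENNReal.ofReal_toReal (h.trans_lt hfin).ne]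
  exact ENNReal.mul_div_cancel (by simpa using hpos) ENNReal.ofReal_ne_top

lemma primitive_pos {a b : ℝ → ℝ} {D : ℝ≥0∞} (hyp : Hyp a b D) {g : ℝ → ℝ≥0∞}
    (hg : Measurable g) (hpos : ∀ x ∈ ooI D, g x ≠ 0) {s : ℝ} (hs : s ∈ ooI D) :
    0 < ∫⁻ u in Set.Ioo 0 s, g u ∂(muM a b D) :=
  lintegral_pos_of_Ioo hg subset_rfl (fun _ ht => hpos _ (ooI_mono hs ht.1 ht.2.le))
    (muM_Ioo_pos hyp le_rfl hs hs.1)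

lemma opK_pos {a b : ℝ → ℝ} {D : ℝ≥0∞} (hyp : Hyp a b D) {g : ℝ → ℝ≥0∞}
    (hg : Measurable g) (hpos : ∀ x ∈ ooI D, g x ≠ 0) {x : ℝ} (hx : x ∈ ooI D) :
    0 < opK a b D g x := by
  obtain ⟨y, hy, hxy⟩ := exists_gt_mem_ooI hx.1.le hx.2
  exact lintegral_pos_of_Ioo (measurable_primitive _ _) (fun t ht => ht.1)
    (fun t ht => (primitive_pos hyp hg hpos (ooI_mono hy (hx.1.trans ht.1) ht.2.le)).ne')
    (nuM_Ioo_pos hyp hx.1.le hy hxy)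

/-- The estimate `K fₙ ≤ δₙ fₙ` reads `fₙ₊₁ ≤ δₙ fₙ`, and applying `K` to it gives
`K fₙ₊₁ ≤ δₙ fₙ₊₁`. -/
lemma delSeqND_succ_le {a b : ℝ → ℝ} {D : ℝ≥0∞} {n : ℕ}
    (hfin : delSeqND a b D n < ∞) (hpos : ∀ x ∈ ooI D, 0 < fseqND a b D n x)
    (hpos' : ∀ x ∈ ooI D, 0 < fseqND a b D (n + 1) x) :
    delSeqND a b D (n + 1) ≤ delSeqND a b D n := by
  refine delSeq_le_of_opK hpos' fun x hx => ?_
  rw [ofReal_fseqND_succ hfin hx (hpos x hx),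
    ← opK_const_mul (measurable_fseqND a b D n).ennreal_ofReal]
  refine opK_mono (fun t ht => ?_) x
  rw [ofReal_fseqND_succ hfin ht (hpos t ht)]
  exact opK_le_of_delSeq ht (hpos t ht)

lemma fseqND_pos_and_delSeqND_le {a b : ℝ → ℝ} {D : ℝ≥0∞} (hyp : Hyp a b D)
    (hδ : deltaND a b D < ∞) (n : ℕ) :
    (∀ x ∈ ooI D, 0 < fseqND a b D n x) ∧ delSeqND a b D n ≤ 4 * deltaND a b D := by
  have h4 : 4 * deltaND a b D < ∞ := ENNReal.mul_lt_top (by simp) hδ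
  induction n with
  | zero =>
    have hp : ∀ x ∈ ooI D, 0 < fseqND a b D 0 x := fun x hx =>
      Real.sqrt_pos.2 (phiR_pos hyp hδ hx)
    exact ⟨hp, delSeq_le_of_opK hp fun x hx => opK_sqrt_phiR_le hyp hδ hx⟩
  | succ n ih =>
    obtain ⟨hp, hd⟩ := ih
    have hfin := hd.trans_lt h4
    have hp' : ∀ x ∈ ooI D, 0 < fseqND a b D (n + 1) x := by
      intro x hx
      rw [← ENNReal.ofReal_pos, ofReal_fseqND_succ hfin hx (hp x hx)]
      exact opK_pos hyp (measurable_fseqND a b D n).ennreal_ofReal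
        (fun t ht => by simpa using hp t ht) hx
    exact ⟨hp', (delSeqND_succ_le hfin hp hp').trans hd⟩

/-! ### The lower bound for the eigenvalue -/

/-- Weighted Cauchy–Schwarz: `(∫ |d|)² ≤ ∫ (e^C d² / F) · ∫ F e^{-C}`. -/
lemma sq_lintegral_le {α : Measure ℝ} {d c : ℝ → ℝ} {F : ℝ → ℝ≥0∞} (hd : Measurable d)
    (hc : Measurable c) (hF : Measurable F) (hF0 : ∀ᵐ t ∂α, F t ≠ 0)
    (hFt : ∀ᵐ t ∂α, F t ≠ ∞) :
    (∫⁻ t, ENNReal.ofReal |d t| ∂α) ^ 2 ≤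
      (∫⁻ t, ENNReal.ofReal (Real.exp (c t) * d t ^ 2) / F t ∂α) *
        ∫⁻ t, ENNReal.ofReal (Real.exp (-c t)) * F t ∂α := by
  set A : ℝ → ℝ≥0∞ := fun t => ENNReal.ofReal (Real.exp (c t) * d t ^ 2) / F t with hA
  set B : ℝ → ℝ≥0∞ := fun t => ENNReal.ofReal (Real.exp (-c t)) * F t with hB
  have hAm : Measurable A := by fun_prop
  have hBm : Measurable B := by fun_prop
  have hAB : ∫⁻ t, ENNReal.ofReal |d t| ∂α =
      ∫⁻ t, ((fun t => A t ^ (1 / 2 : ℝ)) * fun t => B t ^ (1 / 2 : ℝ)) t ∂α := by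
    refine lintegral_congr_ae ?_
    filter_upwards [hF0, hFt] with t h0 ht
    have h1 : A t * B t = ENNReal.ofReal |d t| ^ (2 : ℝ) := by
      have h2 : Real.exp (c t) * d t ^ 2 * Real.exp (-c t) = |d t| ^ 2 := by
        rw [mul_right_comm, ← Real.exp_add, add_neg_cancel, Real.exp_zero, one_mul, sq_abs]
      calc A t * B t = ENNReal.ofReal (Real.exp (c t) * d t ^ 2) / F t * F t *
            ENNReal.ofReal (Real.exp (-c t)) := by rw [hA, hB]; ring
        _ = _ := by
          rw [ENNReal.div_mul_cancel h0 ht, ← ENNReal.ofReal_mul (by positivity), h2,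
            ENNReal.ofReal_pow (abs_nonneg _), ENNReal.rpow_two]
    rw [Pi.mul_apply, ← ENNReal.mul_rpow_of_nonneg _ _ (by norm_num), h1, ← ENNReal.rpow_mul]
    norm_num
  have h := ENNReal.lintegral_mul_le_Lp_mul_Lq α Real.HolderConjugate.two_two
    (hAm.pow_const (1 / 2 : ℝ)).aemeasurable (hBm.pow_const (1 / 2 : ℝ)).aemeasurable
  rw [← hAB] at h
  simp only [← ENNReal.rpow_mul] at h
  norm_num at h
  calc _ ≤ _ := pow_le_pow_left' h 2
    _ = _ := by
      rw [mul_pow, ← ENNReal.rpow_natCast, ← ENNReal.rpow_natCast, ← ENNReal.rpow_mul,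
        ← ENNReal.rpow_mul]
      norm_num

/-- A function in `C¹(0, D)` vanishing near `D` is recovered from its derivative. -/
lemma ofReal_abs_le_lintegral_deriv {D : ℝ≥0∞} {h : ℝ → ℝ} (hC : C1C D h)
    (hp : ∃ p : ℝ, 0 ≤ p ∧ ENNReal.ofReal p < D ∧ ∀ x, p < x → h x = 0)
    {x : ℝ} (hx : x ∈ ooI D) :
    ENNReal.ofReal |h x| ≤ ∫⁻ t in Set.Ioi x ∩ ooI D, ENNReal.ofReal |deriv h t| := by
  obtain ⟨p, hp0, hpD, hz⟩ := hp
  obtain ⟨q, hq, hpq⟩ := exists_gt_mem_ooI hp0 hpD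
  rcases lt_or_ge p x with hpx | hxp
  · simp [hz x hpx]
  have hxq : x ≤ q := hxp.trans hpq.le
  have hsub : Set.Icc x q ⊆ ooI D := fun t ht => ooI_mono hq (hx.1.trans_le ht.1) ht.2
  have hcont : ContinuousOn (deriv h) (Set.Icc x q) := hC.2.2.mono hsub
  have hF := intervalIntegral.integral_deriv_eq_sub (f := h) (a := x) (b := q)
    (fun t ht => hC.2.1 t (hsub (by rwa [Set.uIcc_of_le hxq] at ht)))
    (ContinuousOn.intervalIntegrable (by rwa [Set.uIcc_of_le hxq]))
  rw [hz q hpq, zero_sub, intervalIntegral.integral_of_le hxq] at hF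
  calc ENNReal.ofReal |h x| = ‖∫ t in Set.Ioc x q, deriv h t‖ₑ := by
        rw [hF, enorm_neg, Real.enorm_eq_ofReal_abs]
    _ ≤ ∫⁻ t in Set.Ioc x q, ‖deriv h t‖ₑ := enorm_integral_le_lintegral_enorm _
    _ = ∫⁻ t in Set.Ioc x q, ENNReal.ofReal |deriv h t| := by
        simp_rw [Real.enorm_eq_ofReal_abs]
    _ ≤ _ := lintegral_mono_set
        (show Set.Ioc x q ⊆ Set.Ioi x ∩ ooI D from fun t ht => ⟨ht.1, hsub ⟨ht.1.le, ht.2⟩⟩)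

/-- If `f > 0` and `K f ≤ c f < ∞`, then `μ(h²) ≤ c D(h)`: Cauchy–Schwarz with weight
`F(s) = ∫_0^s f dμ` gives `h(x)² ≤ K f(x) ∫_x^D e^C h'² / F ds`; integrating in `μ(dx)` and
exchanging the integrals leaves `∫_0^s K f dμ ≤ c F(s)`, which cancels the weight. -/
lemma muL2_le_mul_Dform {a b : ℝ → ℝ} {D : ℝ≥0∞} (hyp : Hyp a b D) {f : ℝ → ℝ≥0∞}
    (hf : Measurable f) (hf0 : ∀ x ∈ ooI D, f x ≠ 0) {c : ℝ≥0∞}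
    (hK : ∀ x ∈ ooI D, opK a b D f x ≤ c * f x) (hKt : ∀ x ∈ ooI D, c * f x ≠ ∞)
    {h : ℝ → ℝ} (hC : C1C D h)
    (hp : ∃ p : ℝ, 0 ≤ p ∧ ENNReal.ofReal p < D ∧ ∀ x, p < x → h x = 0) :
    muL2 a b D h ≤ c * Dform a b D h := by
  have hm := measurable_Cf hyp.1 hyp.2.1
  have hdm : Measurable (deriv h) := measurable_deriv h
  set F : ℝ → ℝ≥0∞ := fun s => ∫⁻ u in Set.Ioo 0 s, f u ∂(muM a b D) with hFdef
  have hFm : Measurable F := measurable_primitive _ _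
  have hF0 : ∀ s ∈ ooI D, F s ≠ 0 := fun s hs => (primitive_pos hyp hf hf0 hs).ne'
  have hFt : ∀ s ∈ ooI D, F s ≠ ∞ := by
    intro s hs htop
    -- `F` is monotone, so `F s = ∞` would force `K f(s) ≥ F(s) φ(s) = ∞`.
    have h1 : F s * nuM a b D (Set.Ioi s) ≤ opK a b D f s := by
      rw [← setLIntegral_const]
      exact setLIntegral_mono' measurableSet_Ioi fun t ht =>
        lintegral_mono_set (Set.Ioo_subset_Ioo_right (le_of_lt ht))
    rw [htop, ENNReal.top_mul (nuM_Ioi_pos hyp hs).ne', top_le_iff] at h1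
    exact hKt s hs (top_le_iff.1 (h1 ▸ hK s hs))
  have hI := (isOpen_ooI D).measurableSet
  set k : ℝ → ℝ≥0∞ := fun t => ENNReal.ofReal (Real.exp (Cf a b t) * deriv h t ^ 2) / F t
    with hk
  have hkm : Measurable k := by fun_prop
  have hCS : ∀ x ∈ ooI D, ENNReal.ofReal (h x ^ 2) ≤
      opK a b D f x * ∫⁻ t in Set.Ioi x, k t ∂(volume.restrict (ooI D)) := by
    intro x hx
    have hmem : ∀ᵐ t ∂(volume.restrict (Set.Ioi x ∩ ooI D)), t ∈ Set.Ioi x ∩ ooI D :=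
      ae_restrict_mem (measurableSet_Ioi.inter hI)
    have h1 := sq_lintegral_le (α := volume.restrict (Set.Ioi x ∩ ooI D)) hdm hm hFm
      (hmem.mono fun t ht => hF0 t ht.2) (hmem.mono fun t ht => hFt t ht.2)
    have h2 : opK a b D f x =
        ∫⁻ t in Set.Ioi x ∩ ooI D, ENNReal.ofReal (Real.exp (-Cf a b t)) * F t :=
      setLIntegral_nuM hyp hFm measurableSet_Ioi
    rw [h2, mul_comm, Measure.restrict_restrict measurableSet_Ioi, ← sq_abs,
      ENNReal.ofReal_pow (abs_nonneg _)]
    exact (pow_le_pow_left' (ofReal_abs_le_lintegral_deriv hC hp hx) 2).trans h1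
  calc muL2 a b D h ≤ ∫⁻ x, opK a b D f x *
        ∫⁻ t in Set.Ioi x, k t ∂(volume.restrict (ooI D)) ∂(muM a b D) := by
        refine lintegral_mono_ae ?_
        filter_upwards [ae_mem_ooI_muM a b D] with x hx using hCS x hx
    _ = ∫⁻ t in ooI D, k t * ∫⁻ u in Set.Iio t, opK a b D f u ∂(muM a b D) :=
        lintegral_triangle (measurable_opK a b D f) hkm
    _ ≤ ∫⁻ t in ooI D, c * ENNReal.ofReal (Real.exp (Cf a b t) * deriv h t ^ 2) := by
        refine setLIntegral_mono' hI fun t ht => ?_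
        have h1 : ∫⁻ u in Set.Iio t, opK a b D f u ∂(muM a b D) ≤ c * F t := by
          have hae : (Set.Iio t : Set ℝ) =ᵐ[muM a b D] (Set.Ioo 0 t : Set ℝ) := by
            filter_upwards [ae_mem_ooI_muM a b D] with v hv
            exact propext ⟨fun h => ⟨hv.1, h⟩, fun h => h.2⟩
          rw [setLIntegral_congr hae, hFdef, ← lintegral_const_mul c hf]
          exact setLIntegral_mono' measurableSet_Ioo fun v hv =>
            hK v (ooI_mono ht hv.1 hv.2.le)
        refine (mul_le_mul_right h1 _).trans_eq ?_
        rw [mul_left_comm, hk, ENNReal.div_mul_cancel (hF0 t ht) (hFt t ht)]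
    _ = c * Dform a b D h := lintegral_const_mul _ (by fun_prop)

/-- Theorem 2.5(1): approximating procedure for lower bounds of the ND principal
eigenvalue: `δₙ` is decreasing and `λ₀ ≥ δₙ⁻¹ ≥ (4δ)⁻¹` for all `n ≥ 1`. -/
theorem nd_approximating_procedure_lower
    (a b : ℝ → ℝ) (D : ℝ≥0∞) (hD : 0 < D) (hyp : Hyp a b D)
    (hdelta : deltaND a b D < ∞) :
    (∀ n : ℕ, delSeqND a b D (n + 1) ≤ delSeqND a b D n) ∧
    ∀ n : ℕ, (delSeqND a b D n)⁻¹ ≤ lam0 a b D ∧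
      (4 * deltaND a b D)⁻¹ ≤ (delSeqND a b D n)⁻¹ := by
  have h4 : 4 * deltaND a b D < ∞ := ENNReal.mul_lt_top (by simp) hdelta
  have hfin : ∀ n, delSeqND a b D n < ∞ := fun n =>
    (fseqND_pos_and_delSeqND_le hyp hdelta n).2.trans_lt h4
  have hpos : ∀ n, ∀ x ∈ ooI D, 0 < fseqND a b D n x := fun n =>
    (fseqND_pos_and_delSeqND_le hyp hdelta n).1
  refine ⟨fun n => delSeqND_succ_le (hfin n) (hpos n) (hpos (n + 1)), fun n => ⟨?_,
    ENNReal.inv_le_inv.2 (fseqND_pos_and_delSeqND_le hyp hdelta n).2⟩⟩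
  refine le_sInf ?_
  rintro r ⟨h, hC, hp, -, h1, rfl⟩
  have h2 := muL2_le_mul_Dform hyp (measurable_fseqND a b D n).ennreal_ofReal
    (fun x hx => by simpa using hpos n x hx) (fun x hx => opK_le_of_delSeq hx (hpos n x hx))
    (fun x _ => ENNReal.mul_ne_top (hfin n).ne ENNReal.ofReal_ne_top) hC hp
  rw [h1, mul_comm] at h2
  rw [← one_div]
  exact ENNReal.div_le_of_le_mul h2
end
end
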